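/- arXiv:math/0301175 — 2 statements merged into one kernel-verified Lean document; each statement's English description precedes it below -/
import Mathlib

section
/- Lorentz gauge condition for the Lienard–Wiechert potentials: Let τ > 0 and r > 0. Let f ∈ C¹([0,τ)×ℝ³×ℝ³) vanish for |ξ| > r and satisfy ∂_t ρ_f + div_x j_f = 0, where ρ_f = ∫ f dξ and j_f = ∫ v(ξ) f dξ. Let u ∈ C²([0,τ)×ℝ³×ℝ³) vanish for |ξ| > r and solve, for each fixed ξ, ∂_t²u − Δ_x u = f with u(0,x,ξ) = ∂_t u(0,x,ξ) = 0. Let E^in ∈ C²(ℝ³;ℝ³) satisfy div_x E^in = ρ_f(0,·), let A_I ∈ C²(ℝ³;ℝ³) satisfy div_x A_I = 0, and let A⁰ ∈ C²([0,τ)×ℝ³;ℝ³) solve ∂_t²A⁰ − Δ_x A⁰ = 0 with A⁰(0,·) = A_I and ∂_t A⁰(0,·) = −E^in. Define φ(t,x) = ∫_{ℝ³} u(t,x,ξ) dξ and A(t,x) = A⁰(t,x) + ∫_{ℝ³} v(ξ) u(t,x,ξ) dξ. Then the Lorentz gauge condition ∂_t φ + div_x A = 0 holds on [0,τ)×ℝ³.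 -/
open MeasureTheory Real Set Filter Metric RealInnerProductSpace
open scoped ENNReal NNReal Topology

noncomputable section

/-- Physical space `ℝ³` with its Euclidean structure. -/
abbrev E3 : Type := EuclideanSpace ℝ (Fin 3)

/-- The `i`-th standard basis vector of `ℝ³`. -/
def e3 (i : Fin 3) : E3 := EuclideanSpace.single i 1

/-- The relativistic velocity `v(ξ) = ξ/√(1+|ξ|²)`. -/
def vrel (ξ : E3) : E3 := (Real.sqrt (1 + ‖ξ‖ ^ 2))⁻¹ • ξ

/-- Partial derivative in the `i`-th coordinate direction. -/
def pd3 (u : E3 → ℝ) (i : Fin 3) (x : E3) : ℝ := fderiv ℝ u x (e3 i)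

/-- Divergence of a vector field on `ℝ³`. -/
def divg (F : E3 → E3) (x : E3) : ℝ := ∑ i : Fin 3, pd3 (fun y => F y i) i x

/-- Curl of a vector field on `ℝ³`. -/
def curl3 (F : E3 → E3) (x : E3) : E3 :=
  (WithLp.equiv 2 (Fin 3 → ℝ)).symm
    ![pd3 (fun y => F y 2) 1 x - pd3 (fun y => F y 1) 2 x,
      pd3 (fun y => F y 0) 2 x - pd3 (fun y => F y 2) 0 x,
      pd3 (fun y => F y 1) 0 x - pd3 (fun y => F y 0) 1 x]

/-- Time derivative on `[0,∞)` (one-sided at `t = 0`, the usual derivative at interior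
points). -/
def timeD {α : Type*} [NormedAddCommGroup α] [NormedSpace ℝ α] (G : ℝ → α) (t : ℝ) : α :=
  derivWithin G (Set.Ici 0) t

/-- Laplacian of a scalar function on `ℝ³`. -/
def lapx (w : E3 → ℝ) (x : E3) : ℝ :=
  ∑ i : Fin 3, fderiv ℝ (fun y => fderiv ℝ w y (e3 i)) x (e3 i)

/-- Laplacian of a vector field on `ℝ³`. -/
def lapxV (F : E3 → E3) (x : E3) : E3 :=
  ∑ i : Fin 3, fderiv ℝ (fun y => fderiv ℝ F y (e3 i)) x (e3 i)

/-- The scalar potential `φ(t,x) = ∫ u(t,x,ξ) dξ`. -/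
def phiP (u : ℝ → E3 → E3 → ℝ) (t : ℝ) (x : E3) : ℝ := ∫ ξ : E3, u t x ξ

/-- The vector potential `A(t,x) = A⁰(t,x) + ∫ v(ξ) u(t,x,ξ) dξ`. -/
def AP (A0 : ℝ → E3 → E3) (u : ℝ → E3 → E3 → ℝ) (t : ℝ) (x : E3) : E3 :=
  A0 t x + ∫ ξ : E3, u t x ξ • vrel ξ

/-- The electric field `E = -∂ₜA - ∇ₓφ`. -/
def EP (A0 : ℝ → E3 → E3) (u : ℝ → E3 → E3 → ℝ) (t : ℝ) (x : E3) : E3 :=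
  -timeD (fun s => AP A0 u s x) t - gradient (phiP u t) x

/-- The magnetic field `B = curlₓ A`. -/
def BP (A0 : ℝ → E3 → E3) (u : ℝ → E3 → E3 → ℝ) (t : ℝ) (x : E3) : E3 :=
  curl3 (AP A0 u t) x

/-!
The gauge function `G = ∂ₜφ + div A` formally solves `□G = ∂ₜρ + div j = 0` with zero initial data,
but it is only `C¹`, so the equation holds only weakly. Mollify it in space: for a test function `k`
let `Nₖ = ∂ₜ(k ⋆ₓ G)`. By the wave equations `Nₖ` is the mollified defect `ρ - div E` in Gauss' law,
and by charge conservation `Nₖ` and the functions `∂ⱼk ⋆ₓ G` form a `C¹` solution of the symmetric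
hyperbolic system `∂ₜV = ∑ⱼ ∂ⱼWⱼ`, `∂ₜWⱼ = ∂ⱼV` with zero initial data. The energy of such a
solution, weighted by a cutoff to a backward light cone, does not increase in time, so `Nₖ = 0`.
Hence `k ⋆ₓ G` is constant in time, thus zero, for every `k`, and `G = 0`.
-/

section IntegralOfCompactSupport

lemma continuous_of_continuousOn_uncurry {P Z F : Type*} [TopologicalSpace P] [TopologicalSpace Z]
    [TopologicalSpace F] {S : Set P} {p : P} {G : P → Z → F}
    (hG : ContinuousOn (Function.uncurry G) (S ×ˢ univ)) (hp : p ∈ S) : Continuous (G p) :=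
  hG.comp_continuous (.prodMk_right p) fun _ => ⟨hp, mem_univ _⟩

variable {P Z F : Type*} [NormedAddCommGroup P] [NormedSpace ℝ P]
  [NormedAddCommGroup F] [NormedSpace ℝ F] {S : Set P} {K : Set Z} {p : P}

lemma hasFDerivWithinAt_eq_zero_of_forall_eq_zero (hSu : UniqueDiffOn ℝ S) {G : P → Z → F}
    {G' : P → Z → P →L[ℝ] F} (hp : p ∈ S)
    (hG : ∀ z, HasFDerivWithinAt (fun q => G q z) (G' p z) S p)
    (hGK : ∀ q ∈ S, ∀ z ∉ K, G q z = 0) : ∀ z ∉ K, G' p z = 0 := fun z hz =>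
  (hSu p hp).eq (hG z) <|
    (hasFDerivWithinAt_const (0 : F) p S).congr (fun q hq => hGK q hq z hz) (hGK p hp z hz)

variable [TopologicalSpace Z]

lemma eventually_forall_norm_sub_sub_le (hS : Convex ℝ S) (hK : IsCompact K)
    {G : P → Z → F} {G' : P → Z → P →L[ℝ] F} (hp : p ∈ S)
    (hG' : ContinuousOn (Function.uncurry G') (S ×ˢ K))
    (hG : ∀ q ∈ S, ∀ z ∈ K, HasFDerivWithinAt (fun q => G q z) (G' q z) S q)
    {ε : ℝ} (hε : 0 < ε) :
    ∀ᶠ q in 𝓝[S] p, ∀ z ∈ K, ‖G q z - G p z - G' p z (q - p)‖ ≤ ε * ‖q - p‖ := by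
  obtain ⟨v, hv, hvε⟩ := hK.mem_uniformity_of_prod hG' hp (dist_mem_uniformity hε)
  obtain ⟨δ, hδ, hδv⟩ := Metric.mem_nhdsWithin_iff.1 hv
  filter_upwards [inter_mem_nhdsWithin S (ball_mem_nhds p hδ)] with q hq z hz
  refine Convex.norm_image_sub_le_of_norm_hasFDerivWithin_le' (s := ball p δ ∩ S)
    (f := fun q => G q z) (f' := fun q => G' q z)
    (fun x hx => (hG x hx.2 z hz).mono inter_subset_right) (fun x hx => ?_)
    ((convex_ball p δ).inter hS) ⟨mem_ball_self hδ, hp⟩ ⟨hq.2, hq.1⟩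
  exact (dist_eq_norm _ _).symm.trans_le (hvε x (hδv hx) z hz).le

variable [MeasurableSpace Z] {μ : Measure Z} [IsFiniteMeasureOnCompacts μ]

lemma norm_integral_le_of_compact_support (hK : IsCompact K) {h : Z → F} {C : ℝ}
    (hC : ∀ z ∈ K, ‖h z‖ ≤ C) (hK0 : ∀ z ∉ K, h z = 0) : ‖∫ z, h z ∂μ‖ ≤ C * μ.real K := by
  rw [← setIntegral_eq_integral_of_forall_compl_eq_zero hK0]
  exact norm_setIntegral_le_of_norm_le_const hK.measure_lt_top hC

variable [OpensMeasurableSpace Z]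

lemma integrable_of_continuousOn_uncurry [R1Space Z] {P F : Type*} [TopologicalSpace P]
    [NormedAddCommGroup F] {S : Set P} {p : P} {G : P → Z → F} (hK : IsCompact K)
    (hG : ContinuousOn (Function.uncurry G) (S ×ˢ univ)) (hGK : ∀ z ∉ K, G p z = 0) (hp : p ∈ S) :
    Integrable (G p) μ :=
  (continuous_of_continuousOn_uncurry hG hp).integrable_of_hasCompactSupport (.intro hK hGK)

lemma hasFDerivWithinAt_integral_of_compact_support [R1Space Z] (hS : Convex ℝ S)
    (hSu : UniqueDiffOn ℝ S) (hK : IsCompact K) {G : P → Z → F} {G' : P → Z → P →L[ℝ] F}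
    (hGc : ContinuousOn (Function.uncurry G) (S ×ˢ univ))
    (hG'c : ContinuousOn (Function.uncurry G') (S ×ˢ univ))
    (hG : ∀ p ∈ S, ∀ z, HasFDerivWithinAt (fun q => G q z) (G' p z) S p)
    (hGK : ∀ q ∈ S, ∀ z ∉ K, G q z = 0) (hp : p ∈ S) :
    HasFDerivWithinAt (fun q => ∫ z, G q z ∂μ) (∫ z, G' p z ∂μ) S p := by
  have hG'K : ∀ z ∉ K, G' p z = 0 :=
    hasFDerivWithinAt_eq_zero_of_forall_eq_zero hSu hp (hG p hp) hGK
  have hGi : ∀ q ∈ S, Integrable (G q) μ := fun q hq =>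
    integrable_of_continuousOn_uncurry hK hGc (hGK q hq) hq
  have hG'i : Integrable (G' p) μ := integrable_of_continuousOn_uncurry hK hG'c hG'K hp
  rw [hasFDerivWithinAt_iff_isLittleO, Asymptotics.isLittleO_iff]
  intro c hc
  filter_upwards [self_mem_nhdsWithin, eventually_forall_norm_sub_sub_le hS hK hp
    (hG'c.mono (prod_mono_right (subset_univ K))) (fun q hq z _ => hG q hq z)
    (show 0 < c / (μ.real K + 1) by positivity)] with q hq hbound
  have hremainder : (∫ z, G q z ∂μ) - (∫ z, G p z ∂μ) - (∫ z, G' p z ∂μ) (q - p)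
      = ∫ z, (G q z - G p z - G' p z (q - p)) ∂μ := by
    rw [ContinuousLinearMap.integral_apply hG'i, ← integral_sub (hGi q hq) (hGi p hp)]
    exact (integral_sub ((hGi q hq).sub (hGi p hp)) (hG'i.apply_continuousLinearMap _)).symm
  rw [hremainder]
  calc ‖∫ z, (G q z - G p z - G' p z (q - p)) ∂μ‖
      ≤ c / (μ.real K + 1) * ‖q - p‖ * μ.real K :=
        norm_integral_le_of_compact_support hK hbound fun z hz => by
          simp [hGK q hq z hz, hGK p hp z hz, hG'K z hz]
    _ = μ.real K / (μ.real K + 1) * (c * ‖q - p‖) := by ring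
    _ ≤ 1 * (c * ‖q - p‖) := by
        gcongr
        exact div_le_one_of_le₀ (by linarith) (by positivity)
    _ = c * ‖q - p‖ := one_mul _

end IntegralOfCompactSupport

section DirectionalDerivative

variable {P F F' : Type*} [NormedAddCommGroup P] [NormedSpace ℝ P]
  [NormedAddCommGroup F] [NormedSpace ℝ F] [NormedAddCommGroup F'] [NormedSpace ℝ F']
  {S : Set P} {g h : P → F} {p : P}

/-- The derivative of `g` at `p` in the direction `v`, relative to the set `S`. It is read off the
Fréchet derivative within `S`, so that it makes sense at the boundary time `t = 0` of a slab
`[0, τ) × E`. -/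
def dirDerivWithin (S : Set P) (v : P) (g : P → F) (p : P) : F := fderivWithin ℝ g S p v

lemma contDiffOn_dirDerivWithin {m n : WithTop ℕ∞} (hS : UniqueDiffOn ℝ S)
    (hg : ContDiffOn ℝ n g S) (hmn : m + 1 ≤ n) (v : P) :
    ContDiffOn ℝ m (dirDerivWithin S v g) S :=
  (hg.fderivWithin hS hmn).clm_apply contDiffOn_const

lemma continuousOn_dirDerivWithin (hS : UniqueDiffOn ℝ S) (hg : ContDiffOn ℝ 1 g S) (v : P) :
    ContinuousOn (dirDerivWithin S v g) S :=
  (contDiffOn_dirDerivWithin (m := 0) hS hg (by simp) v).continuousOn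

lemma dirDerivWithin_congr (hgh : EqOn g h S) (v : P) :
    EqOn (dirDerivWithin S v g) (dirDerivWithin S v h) S := fun p hp => by
  rw [dirDerivWithin, fderivWithin_congr hgh (hgh hp), dirDerivWithin]

lemma dirDerivWithin_add (hS : UniqueDiffOn ℝ S) (hg : DifferentiableOn ℝ g S)
    (hh : DifferentiableOn ℝ h S) (v : P) :
    EqOn (dirDerivWithin S v (g + h)) (dirDerivWithin S v g + dirDerivWithin S v h) S :=
  fun p hp => by
    simp [dirDerivWithin, fderivWithin_add (hS p hp) (hg p hp) (hh p hp)]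

lemma dirDerivWithin_sum {ι : Type*} {s : Finset ι} {g : ι → P → F} (hS : UniqueDiffOn ℝ S)
    (hg : ∀ i ∈ s, DifferentiableOn ℝ (g i) S) (v : P) :
    EqOn (dirDerivWithin S v (∑ i ∈ s, g i)) (∑ i ∈ s, dirDerivWithin S v (g i)) S :=
  fun p hp => by
    simp [dirDerivWithin, fderivWithin_sum (hS p hp) fun i hi => hg i hi p hp]

lemma dirDerivWithin_mul {g h : P → ℝ} (hS : UniqueDiffOn ℝ S) (hg : DifferentiableOn ℝ g S)
    (hh : DifferentiableOn ℝ h S) (v : P) :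
    EqOn (dirDerivWithin S v (g * h)) (dirDerivWithin S v g * h + g * dirDerivWithin S v h) S :=
  fun p hp => by
    simp [dirDerivWithin, fderivWithin_mul (hS p hp) (hg p hp) (hh p hp), add_comm, mul_comm]

lemma dirDerivWithin_clm_comp (hS : UniqueDiffOn ℝ S) (L : F →L[ℝ] F')
    (hg : DifferentiableOn ℝ g S) (v : P) :
    EqOn (dirDerivWithin S v (L ∘ g)) (L ∘ dirDerivWithin S v g) S := fun p hp => by
  simp only [dirDerivWithin, Function.comp_apply,
    (L.hasFDerivAt.comp_hasFDerivWithinAt p (hg p hp).hasFDerivWithinAt).fderivWithin (hS p hp),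
    ContinuousLinearMap.comp_apply]

end DirectionalDerivative

section Marginal

variable {P Z F : Type*} [NormedAddCommGroup P] [NormedSpace ℝ P]
  [NormedAddCommGroup Z] [NormedSpace ℝ Z] [NormedAddCommGroup F] [NormedSpace ℝ F]
  {S : Set P} {K : Set Z} {U : P × Z → F} {p : P}

lemma hasFDerivWithinAt_slice_left (hp : p ∈ S) (z : Z)
    (hU : DifferentiableOn ℝ U (S ×ˢ univ)) :
    HasFDerivWithinAt (fun q => U (q, z))
      (fderivWithin ℝ U (S ×ˢ univ) (p, z) ∘L ContinuousLinearMap.inl ℝ P Z) S p :=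
  HasFDerivWithinAt.comp p (t := S ×ˢ univ) (hU _ ⟨hp, mem_univ z⟩).hasFDerivWithinAt
    (hasFDerivAt_prodMk_left p z).hasFDerivWithinAt fun _ hq => ⟨hq, mem_univ z⟩

lemma dirDerivWithin_slice_left (hS : UniqueDiffOn ℝ S) (hp : p ∈ S) (z : Z)
    (hU : DifferentiableOn ℝ U (S ×ˢ univ)) (v : P) :
    dirDerivWithin S v (fun q => U (q, z)) p = dirDerivWithin (S ×ˢ univ) (v, 0) U (p, z) := by
  simp [dirDerivWithin, (hasFDerivWithinAt_slice_left hp z hU).fderivWithin (hS p hp)]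

lemma fderivWithin_comp_inl_eq_zero (hSu : UniqueDiffOn ℝ S)
    (hU : DifferentiableOn ℝ U (S ×ˢ univ)) (hUK : ∀ p ∈ S, ∀ z ∉ K, U (p, z) = 0) :
    ∀ p ∈ S, ∀ z ∉ K,
      fderivWithin ℝ U (S ×ˢ univ) (p, z) ∘L ContinuousLinearMap.inl ℝ P Z = 0 := fun _ hp =>
  hasFDerivWithinAt_eq_zero_of_forall_eq_zero hSu (G := fun q z => U (q, z))
    (G' := fun q z => fderivWithin ℝ U (S ×ˢ univ) (q, z) ∘L ContinuousLinearMap.inl ℝ P Z)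
    hp (hasFDerivWithinAt_slice_left hp · hU) hUK

lemma dirDerivWithin_prod_univ_eq_zero (hS : UniqueDiffOn ℝ S)
    (hU : DifferentiableOn ℝ U (S ×ˢ univ)) (hUK : ∀ p ∈ S, ∀ z ∉ K, U (p, z) = 0) (v : P) :
    ∀ p ∈ S, ∀ z ∉ K, dirDerivWithin (S ×ˢ univ) (v, 0) U (p, z) = 0 := fun p hp z hz => by
  have hzero := fderivWithin_comp_inl_eq_zero hS hU hUK p hp z hz
  simpa [dirDerivWithin] using DFunLike.congr_fun hzero v

variable [MeasurableSpace Z] [OpensMeasurableSpace Z] {μ : Measure Z}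
  [IsFiniteMeasureOnCompacts μ]

lemma hasFDerivWithinAt_marginal (hS : Convex ℝ S) (hSu : UniqueDiffOn ℝ S) (hK : IsCompact K)
    (hU : ContDiffOn ℝ 1 U (S ×ˢ univ)) (hUK : ∀ p ∈ S, ∀ z ∉ K, U (p, z) = 0) (hp : p ∈ S) :
    HasFDerivWithinAt (fun q => ∫ z, U (q, z) ∂μ)
      (∫ z, fderivWithin ℝ U (S ×ˢ univ) (p, z) ∘L ContinuousLinearMap.inl ℝ P Z ∂μ) S p :=
  hasFDerivWithinAt_integral_of_compact_support hS hSu hK (G := fun q z => U (q, z))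
    (G' := fun q z => fderivWithin ℝ U (S ×ˢ univ) (q, z) ∘L ContinuousLinearMap.inl ℝ P Z)
    hU.continuousOn
    ((hU.continuousOn_fderivWithin (hSu.prod uniqueDiffOn_univ) le_rfl).clm_comp
      continuousOn_const)
    (fun _ hq z => hasFDerivWithinAt_slice_left hq z (hU.differentiableOn one_ne_zero)) hUK hp

lemma contDiffOn_one_marginal (hS : Convex ℝ S) (hSu : UniqueDiffOn ℝ S) (hK : IsCompact K)
    (hU : ContDiffOn ℝ 1 U (S ×ˢ univ)) (hUK : ∀ p ∈ S, ∀ z ∉ K, U (p, z) = 0) :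
    ContDiffOn ℝ 1 (fun p => ∫ z, U (p, z) ∂μ) S := by
  rw [← zero_add 1, contDiffOn_succ_iff_hasFDerivWithinAt_of_uniqueDiffOn hSu]
  refine ⟨by simp, _, contDiffOn_zero.2 ?_, fun p => hasFDerivWithinAt_marginal hS hSu hK hU hUK⟩
  exact continuousOn_integral_of_compact_support hK
    ((hU.continuousOn_fderivWithin (hSu.prod uniqueDiffOn_univ) le_rfl).clm_comp
      continuousOn_const)
    fun p z hp hz =>
      fderivWithin_comp_inl_eq_zero hSu (hU.differentiableOn one_ne_zero) hUK p hp z hz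

lemma contDiffOn_two_marginal (hS : Convex ℝ S) (hSu : UniqueDiffOn ℝ S) (hK : IsCompact K)
    (hU : ContDiffOn ℝ 2 U (S ×ˢ univ)) (hUK : ∀ p ∈ S, ∀ z ∉ K, U (p, z) = 0) :
    ContDiffOn ℝ 2 (fun p => ∫ z, U (p, z) ∂μ) S := by
  have hU1 : ContDiffOn ℝ 1 U (S ×ˢ univ) := hU.of_le one_le_two
  rw [← one_add_one_eq_two, contDiffOn_succ_iff_hasFDerivWithinAt_of_uniqueDiffOn hSu]
  refine ⟨by simp, _, ?_, fun p => hasFDerivWithinAt_marginal hS hSu hK hU1 hUK⟩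
  exact contDiffOn_one_marginal hS hSu hK
    (U := fun q => fderivWithin ℝ U (S ×ˢ univ) q ∘L ContinuousLinearMap.inl ℝ P Z)
    ((hU.fderivWithin (hSu.prod uniqueDiffOn_univ) one_add_one_eq_two.le).clm_comp
      contDiffOn_const)
    (fderivWithin_comp_inl_eq_zero hSu (hU1.differentiableOn one_ne_zero) hUK)

lemma dirDerivWithin_marginal (hS : Convex ℝ S) (hSu : UniqueDiffOn ℝ S) (hK : IsCompact K)
    (hU : ContDiffOn ℝ 1 U (S ×ˢ univ)) (hUK : ∀ p ∈ S, ∀ z ∉ K, U (p, z) = 0) (v : P) :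
    EqOn (dirDerivWithin S v fun p => ∫ z, U (p, z) ∂μ)
      (fun p => ∫ z, dirDerivWithin (S ×ˢ univ) (v, 0) U (p, z) ∂μ) S := fun p hp => by
  have hi : Integrable (fun z =>
      fderivWithin ℝ U (S ×ˢ univ) (p, z) ∘L ContinuousLinearMap.inl ℝ P Z) μ :=
    integrable_of_continuousOn_uncurry (G := fun q z =>
        fderivWithin ℝ U (S ×ˢ univ) (q, z) ∘L ContinuousLinearMap.inl ℝ P Z) hK
      ((hU.continuousOn_fderivWithin (hSu.prod uniqueDiffOn_univ) le_rfl).clm_comp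
        continuousOn_const)
      (fderivWithin_comp_inl_eq_zero hSu (hU.differentiableOn one_ne_zero) hUK p hp) hp
  simp [dirDerivWithin, (hasFDerivWithinAt_marginal hS hSu hK hU hUK hp).fderivWithin (hSu p hp),
    ContinuousLinearMap.integral_apply hi]

lemma dirDerivWithin_dirDerivWithin_marginal (hS : Convex ℝ S) (hSu : UniqueDiffOn ℝ S)
    (hK : IsCompact K) (hU : ContDiffOn ℝ 2 U (S ×ˢ univ))
    (hUK : ∀ p ∈ S, ∀ z ∉ K, U (p, z) = 0) (v w : P) :
    EqOn (dirDerivWithin S v (dirDerivWithin S w fun p => ∫ z, U (p, z) ∂μ))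
      (fun p => ∫ z, dirDerivWithin (S ×ˢ univ) (v, 0)
        (dirDerivWithin (S ×ˢ univ) (w, 0) U) (p, z) ∂μ) S := by
  have hU1 : ContDiffOn ℝ 1 U (S ×ˢ univ) := hU.of_le one_le_two
  refine (dirDerivWithin_congr (dirDerivWithin_marginal hS hSu hK hU1 hUK w) v).trans ?_
  exact dirDerivWithin_marginal hS hSu hK
    (contDiffOn_dirDerivWithin (hSu.prod uniqueDiffOn_univ) hU one_add_one_eq_two.le _)
    (dirDerivWithin_prod_univ_eq_zero hSu (hU1.differentiableOn one_ne_zero) hUK w) v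

end Marginal

section SecondOrder

variable {P Z F F' : Type*} [NormedAddCommGroup P] [NormedSpace ℝ P] [NormedAddCommGroup Z]
  [NormedSpace ℝ Z] [NormedAddCommGroup F] [NormedSpace ℝ F] [NormedAddCommGroup F']
  [NormedSpace ℝ F'] {S : Set P} {g h : P → F}

lemma differentiableOn_dirDerivWithin (hS : UniqueDiffOn ℝ S) (hg : ContDiffOn ℝ 2 g S) (v : P) :
    DifferentiableOn ℝ (dirDerivWithin S v g) S :=
  (contDiffOn_dirDerivWithin (m := 1) hS hg one_add_one_eq_two.le v).differentiableOn one_ne_zero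

lemma dirDerivWithin_dirDerivWithin_add (hS : UniqueDiffOn ℝ S) (hg : ContDiffOn ℝ 2 g S)
    (hh : ContDiffOn ℝ 2 h S) (v w : P) :
    EqOn (dirDerivWithin S v (dirDerivWithin S w (g + h)))
      (dirDerivWithin S v (dirDerivWithin S w g) + dirDerivWithin S v (dirDerivWithin S w h)) S :=
  (dirDerivWithin_congr (dirDerivWithin_add hS (hg.differentiableOn two_ne_zero)
    (hh.differentiableOn two_ne_zero) w) v).trans <|
    dirDerivWithin_add hS (differentiableOn_dirDerivWithin hS hg w)
      (differentiableOn_dirDerivWithin hS hh w) v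

lemma dirDerivWithin_dirDerivWithin_clm_comp (hS : UniqueDiffOn ℝ S) (L : F →L[ℝ] F')
    (hg : ContDiffOn ℝ 2 g S) (v w : P) :
    EqOn (dirDerivWithin S v (dirDerivWithin S w (L ∘ g)))
      (L ∘ dirDerivWithin S v (dirDerivWithin S w g)) S :=
  (dirDerivWithin_congr (dirDerivWithin_clm_comp hS L (hg.differentiableOn two_ne_zero) w)
    v).trans <| dirDerivWithin_clm_comp hS L (differentiableOn_dirDerivWithin hS hg w) v

lemma dirDerivWithin_dirDerivWithin_slice_left {U : P × Z → F} (hS : UniqueDiffOn ℝ S)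
    (hU : ContDiffOn ℝ 2 U (S ×ˢ univ)) (z : Z) (v w : P) :
    EqOn (dirDerivWithin S v (dirDerivWithin S w fun q => U (q, z)))
      (fun q => dirDerivWithin (S ×ˢ univ) (v, 0) (dirDerivWithin (S ×ˢ univ) (w, 0) U) (q, z))
      S := fun p hp => by
  rw [dirDerivWithin_congr (fun q hq => dirDerivWithin_slice_left hS hq z
    (hU.differentiableOn two_ne_zero) w) v hp]
  exact dirDerivWithin_slice_left hS hp z
    (differentiableOn_dirDerivWithin (hS.prod uniqueDiffOn_univ) hU _) v

end SecondOrder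

section Slab

variable {E F : Type*} {τ t : ℝ} {p : ℝ × E}

/-- The space-time slab `[0, τ) × E`, with coordinates `(t, x)`. -/
def slab (τ : ℝ) : Set (ℝ × E) := Ico 0 τ ×ˢ univ

lemma sub_zero_mk_mem_slab [AddGroup E] (hp : p ∈ slab τ) (z : E) : p - (0, z) ∈ slab τ := by
  simpa [slab] using hp

lemma eqOn_slab_of_eqOn_interior [TopologicalSpace E]
    [TopologicalSpace F] [T2Space F] {g h : ℝ × E → F} (hg : ContinuousOn g (slab τ))
    (hh : ContinuousOn h (slab τ)) (heq : ∀ t ∈ Ioo 0 τ, ∀ x, g (t, x) = h (t, x)) :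
    EqOn g h (slab τ) := by
  refine EqOn.of_subset_closure (s := Ioo 0 τ ×ˢ univ) (fun p hp => heq p.1 hp.1 p.2) hg hh
    (prod_mono_left Ioo_subset_Ico_self) fun p hp => ?_
  rw [closure_prod_eq, closure_univ, closure_Ioo (hp.1.1.trans_lt hp.1.2).ne]
  exact ⟨Ico_subset_Icc_self hp.1, mem_univ _⟩

variable [NormedAddCommGroup E] [NormedSpace ℝ E] [NormedAddCommGroup F] [NormedSpace ℝ F]
  {g : ℝ × E → F} {x : E}

lemma convex_slab : Convex ℝ (slab τ : Set (ℝ × E)) := (convex_Ico 0 τ).prod convex_univ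

lemma uniqueDiffOn_slab : UniqueDiffOn ℝ (slab τ : Set (ℝ × E)) :=
  (uniqueDiffOn_Ico 0 τ).prod uniqueDiffOn_univ

lemma contDiff_slice_right {n : WithTop ℕ∞} (hg : ContDiffOn ℝ n g (slab τ))
    (ht : t ∈ Ico 0 τ) : ContDiff ℝ n fun y => g (t, y) :=
  contDiffOn_univ.1 <| hg.comp (contDiff_prodMk_right t).contDiffOn fun y _ => ⟨ht, mem_univ y⟩

lemma hasFDerivAt_slice_right (hg : DifferentiableOn ℝ g (slab τ)) (ht : t ∈ Ico 0 τ) :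
    HasFDerivAt (fun y => g (t, y))
      (fderivWithin ℝ g (slab τ) (t, x) ∘L ContinuousLinearMap.inr ℝ ℝ E) x := by
  rw [← hasFDerivWithinAt_univ]
  exact HasFDerivWithinAt.comp x (t := slab τ) (hg _ ⟨ht, mem_univ x⟩).hasFDerivWithinAt
    (hasFDerivAt_prodMk_right t x).hasFDerivWithinAt fun y _ => ⟨ht, mem_univ y⟩

lemma fderiv_slice_right (hg : DifferentiableOn ℝ g (slab τ)) (ht : t ∈ Ico 0 τ) (e : E) :
    fderiv ℝ (fun y => g (t, y)) x e = dirDerivWithin (slab τ) (0, e) g (t, x) := by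
  simp [(hasFDerivAt_slice_right hg ht).fderiv, dirDerivWithin]

lemma fderiv_fderiv_slice_right (hg : ContDiffOn ℝ 2 g (slab τ)) (ht : t ∈ Ico 0 τ) (e : E) :
    fderiv ℝ (fun y => fderiv ℝ (fun z => g (t, z)) y e) x e
      = dirDerivWithin (slab τ) (0, e) (dirDerivWithin (slab τ) (0, e) g) (t, x) := by
  simp only [fderiv_slice_right (hg.differentiableOn two_ne_zero) ht]
  exact fderiv_slice_right (differentiableOn_dirDerivWithin uniqueDiffOn_slab hg _) ht e

lemma hasDerivWithinAt_time (hg : DifferentiableOn ℝ g (slab τ)) (ht : t ∈ Ico 0 τ) :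
    HasDerivWithinAt (fun s => g (s, x)) (dirDerivWithin (slab τ) (1, 0) g (t, x))
      (Ici 0) t := by
  have hIco : HasDerivWithinAt (fun s => g (s, x))
      (dirDerivWithin (slab τ) (1, 0) g (t, x)) (Ico 0 τ) t := by
    simpa [dirDerivWithin, slab] using (hasFDerivWithinAt_slice_left ht x hg).hasDerivWithinAt
  exact hIco.mono_of_mem_nhdsWithin <|
    mem_nhdsWithin.2 ⟨Iio τ, isOpen_Iio, ht.2, fun s hs => ⟨hs.2, hs.1⟩⟩

lemma hasDerivAt_time (hg : DifferentiableOn ℝ g (slab τ)) (ht : t ∈ Ioo 0 τ) :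
    HasDerivAt (fun s => g (s, x)) (dirDerivWithin (slab τ) (1, 0) g (t, x)) t :=
  (hasDerivWithinAt_time hg ⟨ht.1.le, ht.2⟩).hasDerivAt (Ici_mem_nhds ht.1)

lemma deriv_deriv_time (hg : ContDiffOn ℝ 2 g (slab τ)) (ht : t ∈ Ioo 0 τ) :
    deriv (fun s => deriv (fun s' => g (s', x)) s) t
      = dirDerivWithin (slab τ) (1, 0) (dirDerivWithin (slab τ) (1, 0) g) (t, x) := by
  have hderiv : (fun s => deriv (fun s' => g (s', x)) s)
      =ᶠ[𝓝 t] fun s => dirDerivWithin (slab τ) (1, 0) g (s, x) := by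
    filter_upwards [Ioo_mem_nhds ht.1 ht.2] with s hs
    exact (hasDerivAt_time (hg.differentiableOn two_ne_zero) hs).deriv
  rw [hderiv.deriv_eq]
  exact (hasDerivAt_time (differentiableOn_dirDerivWithin uniqueDiffOn_slab hg _) ht).deriv

lemma eq_initial_of_dirDerivWithin_time_eq_zero (hg : DifferentiableOn ℝ g (slab τ))
    (hg' : ∀ p ∈ slab τ, dirDerivWithin (slab τ) (1, 0) g p = 0) :
    ∀ p ∈ slab τ, g p = g (0, p.2) := fun p hp =>
  constant_of_has_deriv_right_zero (f := fun s => g (s, p.2)) (a := 0) (b := p.1)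
    (fun s hs => (hasDerivWithinAt_time hg ⟨hs.1, hs.2.trans_lt hp.1.2⟩).continuousWithinAt.mono
      Icc_subset_Ici_self)
    (fun s hs => by
      have hs' : s ∈ Ico 0 τ := ⟨hs.1, hs.2.trans hp.1.2⟩
      rw [← hg' (s, p.2) ⟨hs', mem_univ _⟩]
      exact (hasDerivWithinAt_time hg hs').mono (Ici_subset_Ici.2 hs.1))
    p.1 ⟨hp.1.1, le_rfl⟩

end Slab

section WaveEquation

variable {ι E F F' : Type*} [Fintype ι] [NormedAddCommGroup E] [InnerProductSpace ℝ E]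
  [NormedAddCommGroup F] [NormedSpace ℝ F] [NormedAddCommGroup F'] [NormedSpace ℝ F']
  {b : OrthonormalBasis ι ℝ E} {τ : ℝ} {u v ρ σ : ℝ × E → F}

local notation "∂ₜ" => dirDerivWithin (slab τ) (1, 0)
local notation "∂ₓ[" e "]" => dirDerivWithin (slab τ) (0, e)

variable (b τ u ρ) in
/-- `u` is a `C²` solution of the wave equation `∂ₜ²u - Δu = ρ` on the slab `[0, τ) × E`, up to
and including the initial time. The Laplacian is expanded in the orthonormal basis `b`. -/
structure IsWaveSolution : Prop where
  contDiffOn : ContDiffOn ℝ 2 u (slab τ)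
  wave_eq : ∀ p ∈ slab τ, ∂ₜ (∂ₜ u) p = ∑ i, ∂ₓ[b i] (∂ₓ[b i] u) p + ρ p

namespace IsWaveSolution

lemma of_deriv_deriv (hu : ContDiffOn ℝ 2 u (slab τ)) (hρ : ContinuousOn ρ (slab τ))
    (heq : ∀ t ∈ Ioo 0 τ, ∀ x, deriv (fun s => deriv (fun s' => u (s', x)) s) t
      - ∑ i, fderiv ℝ (fun y => fderiv ℝ (fun z => u (t, z)) y (b i)) x (b i) = ρ (t, x)) :
    IsWaveSolution b τ u ρ := by
  have hcont : ∀ v, ContinuousOn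
      (dirDerivWithin (slab τ) v (dirDerivWithin (slab τ) v u)) (slab τ) := fun v =>
    continuousOn_dirDerivWithin uniqueDiffOn_slab
      (contDiffOn_dirDerivWithin uniqueDiffOn_slab hu one_add_one_eq_two.le v) v
  refine ⟨hu, eqOn_slab_of_eqOn_interior (hcont (1, 0))
    ((continuousOn_finsetSum _ fun i _ => hcont (0, b i)).add hρ) fun t ht x => ?_⟩
  rw [← heq t ht x, deriv_deriv_time hu ht]
  simp only [fderiv_fderiv_slice_right hu (Ioo_subset_Ico_self ht), add_sub_cancel]

lemma add (hu : IsWaveSolution b τ u ρ) (hv : IsWaveSolution b τ v σ) :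
    IsWaveSolution b τ (u + v) (ρ + σ) where
  contDiffOn := hu.contDiffOn.add hv.contDiffOn
  wave_eq p hp := by
    have hadd := fun w => dirDerivWithin_dirDerivWithin_add uniqueDiffOn_slab hu.contDiffOn
      hv.contDiffOn w w hp
    simp only [hadd, Pi.add_apply, hu.wave_eq p hp, hv.wave_eq p hp, Finset.sum_add_distrib]
    abel

lemma clm_comp (hu : IsWaveSolution b τ u ρ) (L : F →L[ℝ] F') :
    IsWaveSolution b τ (L ∘ u) (L ∘ ρ) where
  contDiffOn := L.contDiff.comp_contDiffOn hu.contDiffOn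
  wave_eq p hp := by
    have hcomp := fun w => dirDerivWithin_dirDerivWithin_clm_comp uniqueDiffOn_slab L
      hu.contDiffOn w w hp
    simp only [hcomp, Function.comp_apply, hu.wave_eq p hp, map_add, map_sum]

lemma marginal {Z : Type*} [NormedAddCommGroup Z] [NormedSpace ℝ Z] [MeasurableSpace Z]
    [OpensMeasurableSpace Z] {μ : Measure Z} [IsFiniteMeasureOnCompacts μ] {K : Set Z}
    {U Q : (ℝ × E) × Z → F} (hK : IsCompact K) (hU : ContDiffOn ℝ 2 U (slab τ ×ˢ univ))
    (hUK : ∀ p ∈ slab τ, ∀ z ∉ K, U (p, z) = 0)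
    (hwave : ∀ z, IsWaveSolution b τ (fun p => U (p, z)) fun p => Q (p, z)) :
    IsWaveSolution b τ (fun p => ∫ z, U (p, z) ∂μ) fun p => ∫ z, Q (p, z) ∂μ where
  contDiffOn := contDiffOn_two_marginal convex_slab uniqueDiffOn_slab hK hU hUK
  wave_eq p hp := by
    set T : Set ((ℝ × E) × Z) := slab τ ×ˢ univ
    have hT : UniqueDiffOn ℝ T := uniqueDiffOn_slab.prod uniqueDiffOn_univ
    have hU1 : ContDiffOn ℝ 1 U T := hU.of_le one_le_two
    have hint : ∀ w, Integrable (fun z =>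
        dirDerivWithin T (w, 0) (dirDerivWithin T (w, 0) U) (p, z)) μ := fun w => by
      have hDU := contDiffOn_dirDerivWithin hT hU one_add_one_eq_two.le (w, 0)
      exact integrable_of_continuousOn_uncurry
        (G := fun q z => dirDerivWithin T (w, 0) (dirDerivWithin T (w, 0) U) (q, z)) hK
        (continuousOn_dirDerivWithin hT hDU _)
        (dirDerivWithin_prod_univ_eq_zero uniqueDiffOn_slab (hDU.differentiableOn one_ne_zero)
          (dirDerivWithin_prod_univ_eq_zero uniqueDiffOn_slab (hU1.differentiableOn one_ne_zero)
            hUK w) w p hp) hp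
    have hmarg := fun w =>
      dirDerivWithin_dirDerivWithin_marginal convex_slab uniqueDiffOn_slab hK hU hUK w w hp (μ := μ)
    have hQ : ∀ z, Q (p, z) = dirDerivWithin T ((1, 0), 0) (dirDerivWithin T ((1, 0), 0) U) (p, z)
        - ∑ i, dirDerivWithin T ((0, b i), 0) (dirDerivWithin T ((0, b i), 0) U) (p, z) := by
      intro z
      have hslice := fun w =>
        dirDerivWithin_dirDerivWithin_slice_left uniqueDiffOn_slab hU z w w hp
      have heq := (hwave z).wave_eq p hp
      simp only [hslice] at heq
      rw [heq, add_sub_cancel_left]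
    simp only [hmarg, hQ]
    rw [integral_sub (hint _) (integrable_finsetSum _ fun i _ => hint _),
      integral_finsetSum _ fun i _ => hint _, add_sub_cancel]

end IsWaveSolution

end WaveEquation

section SpatialConvolution

open scoped Distributions LineDeriv

variable {E : Type*} [NormedAddCommGroup E] [NormedSpace ℝ E]
  {τ : ℝ} {k : 𝓓((⊤ : TopologicalSpace.Opens E), ℝ)} {g h : ℝ × E → ℝ} {p : ℝ × E}

lemma lineDerivOp_testFunction_apply (k : 𝓓((⊤ : TopologicalSpace.Opens E), ℝ)) (e x : E) :
    (∂_{e} k) x = fderiv ℝ k x e := by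
  rw [TestFunction.lineDerivOp_eq_lineDerivCLM ℝ,
    TestFunction.lineDerivCLM_apply_of_le (by simp),
    (k.contDiff.differentiable (by simp) x).lineDeriv_eq_fderiv]

lemma lineDerivOp_testFunction_comm (k : 𝓓((⊤ : TopologicalSpace.Opens E), ℝ)) (e e' : E) :
    ∂_{e} (∂_{e'} k) = ∂_{e'} (∂_{e} k) := by
  have hk2 : ContDiff ℝ 2 k := k.contDiff.of_le ENat.LEInfty.out
  have hk : Differentiable ℝ (fderiv ℝ k) :=
    (hk2.fderiv_right one_add_one_eq_two.le).differentiable one_ne_zero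
  have hsnd : ∀ e e' x : E, (∂_{e} (∂_{e'} k)) x = fderiv ℝ (fderiv ℝ k) x e e' := fun e e' x => by
    rw [lineDerivOp_testFunction_apply, funext (lineDerivOp_testFunction_apply k e'),
      fderiv_clm_apply (hk x) (differentiableAt_const e')]
    simp
  ext x
  rw [hsnd, hsnd]
  exact (hk2.contDiffAt.isSymmSndFDerivAt (by simp)).eq e e'

lemma contDiffOn_mul_comp_sub (hg : ContDiffOn ℝ 1 g (slab τ)) :
    ContDiffOn ℝ 1 (fun q : (ℝ × E) × E => k q.2 * g (q.1 - (0, q.2))) (slab τ ×ˢ univ) :=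
  ((k.contDiff.of_le (by simp)).comp contDiff_snd).contDiffOn.mul <|
    hg.comp (ContDiff.contDiffOn (by fun_prop)) fun q hq => sub_zero_mk_mem_slab hq.1 q.2

lemma dirDerivWithin_const_mul_comp_sub (hg : DifferentiableOn ℝ g (slab τ)) (hp : p ∈ slab τ)
    (c : ℝ) (z : E) (v : ℝ × E) :
    dirDerivWithin (slab τ) v (fun q => c * g (q - (0, z))) p
      = c * dirDerivWithin (slab τ) v g (p - (0, z)) := by
  have hshift : HasFDerivWithinAt (fun q => c * g (q - (0, z)))
      (c • fderivWithin ℝ g (slab τ) (p - (0, z))) (slab τ) p :=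
    (HasFDerivWithinAt.comp p (t := slab τ) (hg _ (sub_zero_mk_mem_slab hp z)).hasFDerivWithinAt
      ((hasFDerivWithinAt_id p _).sub_const (0, z))
      fun q hq => sub_zero_mk_mem_slab hq z).const_mul c
  simp [dirDerivWithin, hshift.fderivWithin (uniqueDiffOn_slab p hp)]

lemma hasFDerivAt_comp_sub_zero_mk (hg : DifferentiableOn ℝ g (slab τ)) (hp : p ∈ slab τ) (z : E) :
    HasFDerivAt (fun z => g (p - (0, z)))
      (-(fderivWithin ℝ g (slab τ) (p - (0, z)) ∘L ContinuousLinearMap.inr ℝ ℝ E)) z := by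
  have hsub : ∀ z, p - (0, z) = (p.1, p.2 - z) := fun z => Prod.ext (sub_zero _) rfl
  simp only [hsub]
  simpa [Function.comp_def] using
    (hasFDerivAt_slice_right hg hp.1).comp z ((hasFDerivAt_id z).const_sub p.2)

variable [MeasureSpace E]

/-- The convolution `k ⋆ₓ g`, in the space variable alone, of a test function `k` with a function
`g` on space-time. Space derivatives of `k ⋆ₓ g` may be moved onto `k`, so it is as smooth in
space as needed although `g` is merely `C¹`. -/
def spaceConv (k : 𝓓((⊤ : TopologicalSpace.Opens E), ℝ)) (g : ℝ × E → ℝ) (p : ℝ × E) : ℝ :=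
  ∫ z, k z * g (p - (0, z))

local infixl:70 "⋆ₓ" => spaceConv
local notation "∂ₓ[" e "]" => dirDerivWithin (slab τ) (0, e)

lemma spaceConv_congr (hgh : EqOn g h (slab τ)) (hp : p ∈ slab τ) : (k ⋆ₓ g) p = (k ⋆ₓ h) p := by
  simp only [spaceConv, hgh (sub_zero_mk_mem_slab hp _)]

lemma spaceConv_initial_eq_zero (hg : ∀ x, g (0, x) = 0) (x : E) : (k ⋆ₓ g) (0, x) = 0 := by
  simp [spaceConv, hg]

section Continuity

variable [OpensMeasurableSpace E] [IsFiniteMeasureOnCompacts (volume : Measure E)]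

lemma integrable_spaceConv (hg : ContinuousOn g (slab τ)) (hp : p ∈ slab τ) :
    Integrable fun z => k z * g (p - (0, z)) :=
  (k.continuous.mul (hg.comp_continuous (by fun_prop)
    fun z => sub_zero_mk_mem_slab hp z)).integrable_of_hasCompactSupport
      k.hasCompactSupport.mul_right

lemma spaceConv_add (hg : ContinuousOn g (slab τ)) (hh : ContinuousOn h (slab τ))
    (hp : p ∈ slab τ) : (k ⋆ₓ (g + h)) p = (k ⋆ₓ g) p + (k ⋆ₓ h) p := by
  simp only [spaceConv, Pi.add_apply, mul_add]
  exact integral_add (integrable_spaceConv hg hp) (integrable_spaceConv hh hp)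

lemma spaceConv_sum {ι : Type*} {s : Finset ι} {g : ι → ℝ × E → ℝ}
    (hg : ∀ i ∈ s, ContinuousOn (g i) (slab τ)) (hp : p ∈ slab τ) :
    (k ⋆ₓ (∑ i ∈ s, g i)) p = ∑ i ∈ s, (k ⋆ₓ g i) p := by
  simp only [spaceConv, Finset.sum_apply, Finset.mul_sum]
  exact integral_finsetSum _ fun i hi => integrable_spaceConv (hg i hi) hp

lemma spaceConv_add_sum {ι : Type*} {s : Finset ι} {h : ι → ℝ × E → ℝ}
    (hg : ContinuousOn g (slab τ)) (hh : ∀ i ∈ s, ContinuousOn (h i) (slab τ)) (hp : p ∈ slab τ) :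
    (k ⋆ₓ (g + ∑ i ∈ s, h i)) p = (k ⋆ₓ g) p + ∑ i ∈ s, (k ⋆ₓ h i) p := by
  have hsum : ContinuousOn (∑ i ∈ s, h i) (slab τ) := by
    rw [Finset.sum_fn]
    exact continuousOn_finsetSum s hh
  rw [spaceConv_add hg hsum hp, spaceConv_sum hh hp]

lemma contDiffOn_spaceConv (hg : ContDiffOn ℝ 1 g (slab τ)) :
    ContDiffOn ℝ 1 (k ⋆ₓ g) (slab τ) :=
  contDiffOn_one_marginal convex_slab uniqueDiffOn_slab k.hasCompactSupport
    (contDiffOn_mul_comp_sub hg) fun p _ z hz => by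
      simp [image_eq_zero_of_notMem_tsupport hz]

lemma dirDerivWithin_spaceConv (hg : ContDiffOn ℝ 1 g (slab τ)) (v : ℝ × E) :
    EqOn (dirDerivWithin (slab τ) v (k ⋆ₓ g)) (k ⋆ₓ dirDerivWithin (slab τ) v g) (slab τ) := by
  intro p hp
  have hU := contDiffOn_mul_comp_sub (k := k) hg
  refine (dirDerivWithin_marginal convex_slab uniqueDiffOn_slab k.hasCompactSupport hU
    (fun p _ z hz => by simp [image_eq_zero_of_notMem_tsupport hz]) v hp).trans
      (integral_congr_ae (.of_forall fun z => ?_))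
  exact (dirDerivWithin_slice_left uniqueDiffOn_slab hp z (hU.differentiableOn one_ne_zero)
    v).symm.trans (dirDerivWithin_const_mul_comp_sub (hg.differentiableOn one_ne_zero) hp (k z) z v)

end Continuity

variable [FiniteDimensional ℝ E] [BorelSpace E] [(volume : Measure E).IsAddHaarMeasure]

lemma spaceConv_dirDerivWithin_space (hg : ContDiffOn ℝ 1 g (slab τ)) (e : E) :
    EqOn (k ⋆ₓ ∂ₓ[e] g) (∂_{e} k ⋆ₓ g) (slab τ) := by
  intro p hp
  have hg' := hasFDerivAt_comp_sub_zero_mk (hg.differentiableOn one_ne_zero) hp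
  have hfderiv : ∀ z, fderiv ℝ (fun z => g (p - (0, z))) z e = -∂ₓ[e] g (p - (0, z)) := fun z => by
    simp [(hg' z).fderiv, dirDerivWithin]
  have hk : ∀ z, fderiv ℝ k z e = (∂_{e} k) z := fun z =>
    (lineDerivOp_testFunction_apply k e z).symm
  have hparts := integral_mul_fderiv_eq_neg_fderiv_mul_of_integrable (μ := (volume : Measure E))
    (f := k) (g := fun z => g (p - (0, z))) (v := e)
    (by simpa only [hk] using integrable_spaceConv hg.continuousOn hp)
    (by simpa only [hfderiv, mul_neg, integrable_fun_neg_iff] using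
      integrable_spaceConv (continuousOn_dirDerivWithin uniqueDiffOn_slab hg (0, e)) hp)
    (integrable_spaceConv hg.continuousOn hp)
    (fun z _ => k.contDiff.differentiable (by simp) z) fun z _ => (hg' z).differentiableAt
  simpa only [spaceConv, hfderiv, hk, mul_neg, integral_neg, neg_inj] using hparts

end SpatialConvolution

section LightConeWeight

variable {ι E : Type*} [NormedAddCommGroup E] {τ R : ℝ} {x₀ : E} {p : ℝ × E}

/-- A smooth cutoff to the backward light cone: it vanishes for `‖x - x₀‖ ≥ R - t`, equals `1` at
`(R - 2, x₀)`, and its space gradient is dominated by its rate of decrease in time. The norm is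
regularized to `√(1 + ‖x - x₀‖²)`, whose gradient is everywhere defined and has length at most
`1`. -/
def lightConeWeight (R : ℝ) (x₀ : E) (p : ℝ × E) : ℝ :=
  smoothTransition (R - p.1 - √(1 + ‖p.2 - x₀‖ ^ 2))

lemma lightConeWeight_nonneg : 0 ≤ lightConeWeight R x₀ p := smoothTransition.nonneg _

lemma lightConeWeight_apex (t : ℝ) : lightConeWeight (t + 2) x₀ (t, x₀) = 1 :=
  smoothTransition.one_of_one_le (by norm_num)

lemma lightConeWeight_eq_zero (hp : 0 ≤ p.1) (hx : p.2 ∉ closedBall x₀ R) :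
    lightConeWeight R x₀ p = 0 := by
  rw [mem_closedBall_iff_norm, not_le] at hx
  have hsqrt : ‖p.2 - x₀‖ ≤ √(1 + ‖p.2 - x₀‖ ^ 2) := le_sqrt_of_sq_le (by linarith)
  exact smoothTransition.zero_of_nonpos (by linarith)

variable [InnerProductSpace ℝ E]

local notation "∂ₜ" => dirDerivWithin (slab τ) (1, 0)
local notation "∂ₓ[" e "]" => dirDerivWithin (slab τ) (0, e)

lemma contDiff_sqrt_one_add_norm_sub_sq (x₀ : E) :
    ContDiff ℝ 1 fun x => √(1 + ‖x - x₀‖ ^ 2) :=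
  (contDiff_const.add ((contDiff_id.sub contDiff_const).norm_sq ℝ)).sqrt fun _ => by positivity

lemma contDiff_lightConeWeight (R : ℝ) (x₀ : E) : ContDiff ℝ 1 (lightConeWeight R x₀) :=
  smoothTransition.contDiff.comp <| (contDiff_const.sub contDiff_fst).sub <|
    (contDiff_sqrt_one_add_norm_sub_sq x₀).comp contDiff_snd

lemma hasFDerivAt_sqrt_one_add_norm_sub_sq (x₀ x : E) :
    HasFDerivAt (fun x => √(1 + ‖x - x₀‖ ^ 2))
      (innerSL ℝ ((√(1 + ‖x - x₀‖ ^ 2))⁻¹ • (x - x₀))) x := by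
  have hsq := ((hasFDerivAt_id x).sub_const x₀).norm_sq.const_add 1
  refine (hsq.sqrt (by positivity)).congr_fderiv ?_
  ext y
  simp
  ring

lemma norm_inv_sqrt_one_add_norm_sq_smul_le (x : E) : ‖(√(1 + ‖x‖ ^ 2))⁻¹ • x‖ ≤ 1 := by
  rw [norm_smul, norm_inv, norm_of_nonneg (sqrt_nonneg _), inv_mul_le_one₀ (by positivity)]
  exact le_sqrt_of_sq_le (by linarith)

lemma dirDerivWithin_lightConeWeight (hp : p ∈ slab τ) (v : ℝ × E) :
    dirDerivWithin (slab τ) v (lightConeWeight R x₀) p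
      = -deriv smoothTransition (R - p.1 - √(1 + ‖p.2 - x₀‖ ^ 2))
        * (v.1 + ⟪(√(1 + ‖p.2 - x₀‖ ^ 2))⁻¹ • (p.2 - x₀), v.2⟫) := by
  have hcutoff := ((smoothTransition.contDiff (n := 1)).differentiable (by simp)
    (R - p.1 - √(1 + ‖p.2 - x₀‖ ^ 2))).hasDerivAt
  have hcone : HasFDerivAt (fun p : ℝ × E => R - p.1 - √(1 + ‖p.2 - x₀‖ ^ 2)) _ p :=
    (hasFDerivAt_fst.const_sub R).sub <|
      (hasFDerivAt_sqrt_one_add_norm_sub_sq x₀ p.2).comp p hasFDerivAt_snd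
  have hweight : HasFDerivAt (lightConeWeight R x₀) _ p := hcutoff.comp_hasFDerivAt p hcone
  rw [dirDerivWithin, hweight.hasFDerivWithinAt.fderivWithin (uniqueDiffOn_slab p hp)]
  simp [inner_smul_left, inner_sub_left]
  ring

lemma dirDerivWithin_time_lightConeWeight_nonpos (hp : p ∈ slab τ) :
    ∂ₜ (lightConeWeight R x₀) p ≤ 0 := by
  simpa [dirDerivWithin_lightConeWeight hp] using smoothTransition.monotone.deriv_nonneg

lemma sum_sq_dirDerivWithin_space_lightConeWeight_le [Fintype ι] (b : OrthonormalBasis ι ℝ E)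
    (hp : p ∈ slab τ) :
    ∑ i, ∂ₓ[b i] (lightConeWeight R x₀) p ^ 2 ≤ ∂ₜ (lightConeWeight R x₀) p ^ 2 := by
  simp only [dirDerivWithin_lightConeWeight hp, zero_add, mul_pow, ← Finset.mul_sum,
    b.sum_sq_inner_left, inner_zero_right, add_zero, one_pow]
  gcongr
  exact pow_le_one₀ (norm_nonneg _) (norm_inv_sqrt_one_add_norm_sq_smul_le _)

end LightConeWeight

section IntegralFDeriv

variable {E : Type*} [NormedAddCommGroup E] [NormedSpace ℝ E] [MeasurableSpace E]
  {μ : Measure E} {g : E → ℝ}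

lemma integrable_fderiv_apply_of_hasCompactSupport [OpensMeasurableSpace E]
    [IsFiniteMeasureOnCompacts μ] (hg : ContDiff ℝ 1 g) (hgc : HasCompactSupport g) (e : E) :
    Integrable (fun x => fderiv ℝ g x e) μ :=
  ((hg.continuous_fderiv one_ne_zero).clm_apply continuous_const).integrable_of_hasCompactSupport
    (hgc.fderiv_apply (𝕜 := ℝ) e)

lemma integral_fderiv_apply_eq_zero_of_hasCompactSupport [FiniteDimensional ℝ E] [BorelSpace E]
    [μ.IsAddHaarMeasure] (hg : ContDiff ℝ 1 g) (hgc : HasCompactSupport g) (e : E) :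
    ∫ x, fderiv ℝ g x e ∂μ = 0 := by
  simpa using integral_mul_fderiv_eq_neg_fderiv_mul_of_integrable (μ := μ) (f := fun _ => 1)
    (g := g) (v := e) (by simp)
    (by simpa using integrable_fderiv_apply_of_hasCompactSupport hg hgc e)
    (by simpa using hg.continuous.integrable_of_hasCompactSupport hgc)
    (fun _ _ => differentiableAt_const _) fun x _ => hg.differentiable one_ne_zero x

end IntegralFDeriv

section EnergyEstimate

variable {ι E : Type*} [Fintype ι] [NormedAddCommGroup E] [InnerProductSpace ℝ E]
  {b : OrthonormalBasis ι ℝ E} {τ : ℝ} {K : Set E} {h w V : ℝ × E → ℝ} {q W : ι → ℝ × E → ℝ}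
  {p : ℝ × E}

local notation "∂ₜ" => dirDerivWithin (slab τ) (1, 0)
local notation "∂ₓ[" e "]" => dirDerivWithin (slab τ) (0, e)

lemma mul_sq_add_sum_sq_le {a v : ℝ} {c y : ι → ℝ} (ha : a ≤ 0) (hc : ∑ i, c i ^ 2 ≤ a ^ 2) :
    a * (v ^ 2 + ∑ i, y i ^ 2) ≤ 2 * v * ∑ i, c i * y i := by
  have hcauchy : (∑ i, c i * y i) ^ 2 ≤ a ^ 2 * ∑ i, y i ^ 2 :=
    (Finset.sum_mul_sq_le_sq_mul_sq _ _ _).trans (by gcongr)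
  have hamgm : (2 * v * ∑ i, c i * y i) ^ 2 ≤ (-a * (v ^ 2 + ∑ i, y i ^ 2)) ^ 2 :=
    calc (2 * v * ∑ i, c i * y i) ^ 2 = 4 * v ^ 2 * (∑ i, c i * y i) ^ 2 := by ring
      _ ≤ 4 * v ^ 2 * (a ^ 2 * ∑ i, y i ^ 2) := by gcongr
      _ ≤ (-a * (v ^ 2 + ∑ i, y i ^ 2)) ^ 2 := by
        nlinarith [sq_nonneg (a * (v ^ 2 - ∑ i, y i ^ 2))]
  linarith [(abs_le_of_sq_le_sq' hamgm (mul_nonneg (neg_nonneg.2 ha) (by positivity))).1]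

lemma dirDerivWithin_time_weighted_energy_le (hw : DifferentiableOn ℝ w (slab τ))
    (hV : DifferentiableOn ℝ V (slab τ)) (hW : ∀ i, DifferentiableOn ℝ (W i) (slab τ))
    (hp : p ∈ slab τ) (hVt : ∂ₜ V p = ∑ i, ∂ₓ[b i] (W i) p)
    (hWt : ∀ i, ∂ₜ (W i) p = ∂ₓ[b i] V p) (hwt : ∂ₜ w p ≤ 0)
    (hwx : ∑ i, ∂ₓ[b i] w p ^ 2 ≤ ∂ₜ w p ^ 2) :
    ∂ₜ (w * (V * V + ∑ i, W i * W i)) p ≤ ∑ i, ∂ₓ[b i] (w * (V * W i + W i * V)) p := by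
  have hS : UniqueDiffOn ℝ (slab τ : Set (ℝ × E)) := uniqueDiffOn_slab
  have hWW : ∀ i ∈ Finset.univ, DifferentiableOn ℝ (W i * W i) (slab τ) := fun i _ =>
    (hW i).mul (hW i)
  have hsum : ∂ₜ (∑ i, W i * W i) p = 2 * ∑ i, W i p * ∂ₓ[b i] V p := by
    simp only [dirDerivWithin_sum hS hWW _ hp, Finset.sum_apply, Finset.mul_sum,
      dirDerivWithin_mul hS (hW _) (hW _) _ hp, Pi.add_apply, Pi.mul_apply, hWt]
    exact Finset.sum_congr rfl fun i _ => by ring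
  have henergy : ∂ₜ (w * (V * V + ∑ i, W i * W i)) p = ∂ₜ w p * (V p ^ 2 + ∑ i, W i p ^ 2)
      + 2 * w p * (V p * ∑ i, ∂ₓ[b i] (W i) p + ∑ i, W i p * ∂ₓ[b i] V p) := by
    simp only [dirDerivWithin_mul hS hw ((hV.mul hV).add (.sum hWW)) _ hp,
      dirDerivWithin_add hS (hV.mul hV) (.sum hWW) _ hp, dirDerivWithin_mul hS hV hV _ hp,
      Pi.add_apply, Pi.mul_apply, Finset.sum_apply, hVt, hsum]
    simp only [← sq]
    ring
  have hflux : ∀ i, ∂ₓ[b i] (w * (V * W i + W i * V)) p = 2 * V p * (∂ₓ[b i] w p * W i p)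
      + 2 * w p * (V p * ∂ₓ[b i] (W i) p + W i p * ∂ₓ[b i] V p) := fun i => by
    have hVW := hV.mul (hW i)
    have hWV := (hW i).mul hV
    simp only [dirDerivWithin_mul hS hw (hVW.add hWV) _ hp, dirDerivWithin_add hS hVW hWV _ hp,
      dirDerivWithin_mul hS hV (hW i) _ hp, dirDerivWithin_mul hS (hW i) hV _ hp, Pi.add_apply,
      Pi.mul_apply]
    ring
  simp only [henergy, hflux, Finset.sum_add_distrib, ← Finset.mul_sum]
  exact add_le_add_left (mul_sq_add_sum_sq_le hwt hwx) _

variable [FiniteDimensional ℝ E] [MeasurableSpace E] [BorelSpace E]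

lemma integral_dirDerivWithin_time_nonpos {μ : Measure E} [μ.IsAddHaarMeasure] (hK : IsCompact K)
    (hh : ContDiffOn ℝ 1 h (slab τ)) (hq : ∀ i, ContDiffOn ℝ 1 (q i) (slab τ))
    (hhK : ∀ t ∈ Ico 0 τ, ∀ x ∉ K, h (t, x) = 0)
    (hqK : ∀ i, ∀ t ∈ Ico 0 τ, ∀ x ∉ K, q i (t, x) = 0)
    (hle : ∀ p ∈ slab τ, ∂ₜ h p ≤ ∑ i, ∂ₓ[b i] (q i) p) {t : ℝ} (ht : t ∈ Ico 0 τ) :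
    ∫ x, ∂ₜ h (t, x) ∂μ ≤ 0 := by
  have hslice : ∀ i, ContDiff ℝ 1 fun x => q i (t, x) := fun i => contDiff_slice_right (hq i) ht
  have hsupp : ∀ i, HasCompactSupport fun x => q i (t, x) := fun i => .intro hK (hqK i t ht)
  have hflux : ∀ i x, ∂ₓ[b i] (q i) (t, x) = fderiv ℝ (fun x => q i (t, x)) x (b i) := fun i x =>
    (fderiv_slice_right ((hq i).differentiableOn one_ne_zero) ht (b i)).symm
  have hint : ∀ i, Integrable (fun x => ∂ₓ[b i] (q i) (t, x)) μ := fun i => by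
    simpa only [hflux] using integrable_fderiv_apply_of_hasCompactSupport (hslice i) (hsupp i) (b i)
  have htime : Integrable (fun x => ∂ₜ h (t, x)) μ :=
    integrable_of_continuousOn_uncurry (G := fun t x => ∂ₜ h (t, x)) hK
      (continuousOn_dirDerivWithin uniqueDiffOn_slab hh (1, 0))
      (dirDerivWithin_prod_univ_eq_zero (uniqueDiffOn_Ico 0 τ)
        (hh.differentiableOn one_ne_zero) hhK 1 t ht) ht
  calc ∫ x, ∂ₜ h (t, x) ∂μ ≤ ∫ x, ∑ i, ∂ₓ[b i] (q i) (t, x) ∂μ :=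
        integral_mono htime (integrable_finsetSum _ fun i _ => hint i)
          fun x => hle (t, x) ⟨ht, mem_univ x⟩
    _ = ∑ i, ∫ x, fderiv ℝ (fun x => q i (t, x)) x (b i) ∂μ := by
        rw [integral_finsetSum _ fun i _ => hint i]
        simp only [hflux]
    _ = 0 := Finset.sum_eq_zero fun i _ =>
        integral_fderiv_apply_eq_zero_of_hasCompactSupport (hslice i) (hsupp i) (b i)

lemma antitoneOn_integral_of_dirDerivWithin_time_le {μ : Measure E} [μ.IsAddHaarMeasure]
    (hK : IsCompact K) (hh : ContDiffOn ℝ 1 h (slab τ)) (hq : ∀ i, ContDiffOn ℝ 1 (q i) (slab τ))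
    (hhK : ∀ t ∈ Ico 0 τ, ∀ x ∉ K, h (t, x) = 0)
    (hqK : ∀ i, ∀ t ∈ Ico 0 τ, ∀ x ∉ K, q i (t, x) = 0)
    (hle : ∀ p ∈ slab τ, ∂ₜ h p ≤ ∑ i, ∂ₓ[b i] (q i) p) :
    AntitoneOn (fun t => ∫ x, h (t, x) ∂μ) (Ico 0 τ) := by
  have hdiff := (contDiffOn_one_marginal (μ := μ) (convex_Ico 0 τ) (uniqueDiffOn_Ico 0 τ) hK hh
    hhK).differentiableOn one_ne_zero
  refine antitoneOn_of_hasDerivWithinAt_nonpos (convex_Ico 0 τ) hdiff.continuousOn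
    (f' := dirDerivWithin (Ico 0 τ) 1 fun t => ∫ x, h (t, x) ∂μ) (fun t ht => ?_) fun t ht => ?_
  · exact (hdiff t (interior_subset ht)).hasFDerivWithinAt.hasDerivWithinAt.mono interior_subset
  · rw [dirDerivWithin_marginal (convex_Ico 0 τ) (uniqueDiffOn_Ico 0 τ) hK hh hhK 1
      (interior_subset ht)]
    exact integral_dirDerivWithin_time_nonpos hK hh hq hhK hqK hle (interior_subset ht)

lemma eq_zero_of_dirDerivWithin_time_le (hK : IsCompact K) (hh : ContDiffOn ℝ 1 h (slab τ))
    (hq : ∀ i, ContDiffOn ℝ 1 (q i) (slab τ)) (hhK : ∀ t ∈ Ico 0 τ, ∀ x ∉ K, h (t, x) = 0)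
    (hqK : ∀ i, ∀ t ∈ Ico 0 τ, ∀ x ∉ K, q i (t, x) = 0)
    (hle : ∀ p ∈ slab τ, ∂ₜ h p ≤ ∑ i, ∂ₓ[b i] (q i) p)
    (hpos : ∀ p ∈ slab τ, 0 ≤ h p) (hinit : ∀ x, h (0, x) = 0) :
    ∀ p ∈ slab τ, h p = 0 := by
  rintro ⟨t, x⟩ ⟨ht : t ∈ Ico 0 τ, _⟩
  by_contra hne
  have hdecay : ∫ y, h (t, y) ≤ ∫ y, h (0, y) :=
    antitoneOn_integral_of_dirDerivWithin_time_le hK hh hq hhK hqK hle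
      ⟨le_rfl, ht.1.trans_lt ht.2⟩ ht ht.1
  have hlt : 0 < ∫ y, h (t, y) :=
    (contDiff_slice_right hh ht).continuous.integral_pos_of_hasCompactSupport_nonneg_nonzero
      (.intro hK (hhK t ht)) (fun y => hpos (t, y) ⟨ht, mem_univ y⟩) hne
  simp only [hinit, integral_zero] at hdecay
  exact hdecay.not_gt hlt

lemma eq_zero_of_symmetric_hyperbolic (hV : ContDiffOn ℝ 1 V (slab τ))
    (hW : ∀ i, ContDiffOn ℝ 1 (W i) (slab τ))
    (hVt : ∀ p ∈ slab τ, ∂ₜ V p = ∑ i, ∂ₓ[b i] (W i) p)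
    (hWt : ∀ i, ∀ p ∈ slab τ, ∂ₜ (W i) p = ∂ₓ[b i] V p)
    (hV0 : ∀ x, V (0, x) = 0) (hW0 : ∀ i x, W i (0, x) = 0) :
    ∀ p ∈ slab τ, V p = 0 := by
  rintro ⟨t, x⟩ hp
  set w : ℝ × E → ℝ := lightConeWeight (t + 2) x
  have hw : ContDiffOn ℝ 1 w (slab τ) := (contDiff_lightConeWeight (t + 2) x).contDiffOn
  have hwK : ∀ s ∈ Ico 0 τ, ∀ y ∉ closedBall x (t + 2), w (s, y) = 0 := fun s hs y hy =>
    lightConeWeight_eq_zero hs.1 hy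
  have hWW : ContDiffOn ℝ 1 (∑ i, W i * W i) (slab τ) := by
    rw [Finset.sum_fn]
    exact .sum fun i _ => (hW i).mul (hW i)
  have henergy : (w * (V * V + ∑ i, W i * W i)) (t, x) = 0 :=
    eq_zero_of_dirDerivWithin_time_le (b := b) (h := w * (V * V + ∑ i, W i * W i))
      (isCompact_closedBall x (t + 2))
      (hw.mul ((hV.mul hV).add hWW))
      (q := fun i => w * (V * W i + W i * V))
      (fun i => hw.mul ((hV.mul (hW i)).add ((hW i).mul hV)))
      (fun s hs y hy => by simp [hwK s hs y hy]) (fun i s hs y hy => by simp [hwK s hs y hy])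
      (fun p hp => dirDerivWithin_time_weighted_energy_le (hw.differentiableOn one_ne_zero)
        (hV.differentiableOn one_ne_zero) (fun i => (hW i).differentiableOn one_ne_zero) hp
        (hVt p hp) (fun i => hWt i p hp) (dirDerivWithin_time_lightConeWeight_nonpos hp)
        (sum_sq_dirDerivWithin_space_lightConeWeight_le b hp))
      (fun p _ => by
        simp only [Pi.mul_apply, Pi.add_apply, Finset.sum_apply]
        simp only [← sq]
        exact mul_nonneg lightConeWeight_nonneg (by positivity))
      (fun y => by simp [hV0, hW0]) _ hp
  simp only [Pi.mul_apply, Pi.add_apply, Finset.sum_apply, w, lightConeWeight_apex,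
    one_mul] at henergy
  simp only [← sq] at henergy
  have hsum : 0 ≤ ∑ i, W i (t, x) ^ 2 := Finset.sum_nonneg fun i _ => sq_nonneg _
  exact pow_eq_zero_iff two_ne_zero |>.1 (le_antisymm (by linarith) (sq_nonneg _))

end EnergyEstimate

section LorentzGauge

open scoped Distributions LineDeriv

variable {ι E : Type*} [Fintype ι] [NormedAddCommGroup E] [InnerProductSpace ℝ E]
  {b : OrthonormalBasis ι ℝ E} {τ : ℝ} {φ ρ : ℝ × E → ℝ} {a J : ι → ℝ × E → ℝ} {p : ℝ × E}

local infixl:70 "⋆ₓ" => spaceConv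
local notation "∂ₜ" => dirDerivWithin (slab τ) (1, 0)
local notation "∂ₓ[" e "]" => dirDerivWithin (slab τ) (0, e)

lemma dirDerivWithin_slab_comm {F : Type*} [NormedAddCommGroup F] [NormedSpace ℝ F]
    {g : ℝ × E → F} (hg : ContDiffOn ℝ 2 g (slab τ)) (v w : ℝ × E) :
    EqOn (dirDerivWithin (slab τ) v (dirDerivWithin (slab τ) w g))
      (dirDerivWithin (slab τ) w (dirDerivWithin (slab τ) v g)) (slab τ) := by
  intro p hp
  have hclosure : p ∈ closure (interior (slab τ : Set (ℝ × E))) := by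
    rw [slab, interior_prod_eq, interior_Ico, interior_univ, closure_prod_eq, closure_univ,
      closure_Ioo (hp.1.1.trans_lt hp.1.2).ne]
    exact ⟨Ico_subset_Icc_self hp.1, mem_univ _⟩
  have hsymm : IsSymmSndFDerivWithinAt ℝ g (slab τ) p :=
    (hg p hp).isSymmSndFDerivWithinAt (by simp) uniqueDiffOn_slab hclosure hp
  have hfderiv : DifferentiableWithinAt ℝ (fderivWithin ℝ g (slab τ)) (slab τ) p :=
    (hg.fderivWithin uniqueDiffOn_slab one_add_one_eq_two.le).differentiableOn one_ne_zero p hp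
  have hsnd : ∀ v w, dirDerivWithin (slab τ) v (dirDerivWithin (slab τ) w g) p
      = fderivWithin ℝ (fderivWithin ℝ g (slab τ)) (slab τ) p v w := fun v w => by
    unfold dirDerivWithin
    rw [fderivWithin_clm_apply (uniqueDiffOn_slab p hp) hfderiv (differentiableWithinAt_const w)]
    simp
  rw [hsnd, hsnd, hsymm.eq]

variable (b τ φ a) in
/-- The quantity `∂ₜφ + div a` whose vanishing is the Lorentz gauge condition, for the scalar
potential `φ` and the vector potential with components `a i` in the orthonormal basis `b`. -/
def lorentzGauge : ℝ × E → ℝ := ∂ₜ φ + ∑ i, ∂ₓ[b i] (a i)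

lemma contDiffOn_lorentzGauge (hφ : ContDiffOn ℝ 2 φ (slab τ))
    (ha : ∀ i, ContDiffOn ℝ 2 (a i) (slab τ)) :
    ContDiffOn ℝ 1 (lorentzGauge b τ φ a) (slab τ) := by
  rw [lorentzGauge, Finset.sum_fn]
  exact (contDiffOn_dirDerivWithin uniqueDiffOn_slab hφ one_add_one_eq_two.le _).add <|
    .sum fun i _ => contDiffOn_dirDerivWithin uniqueDiffOn_slab (ha i) one_add_one_eq_two.le _

variable (b τ φ a) in
/-- The `i`-th component of `∇φ + ∂ₜa`, which is minus the electric field of the potentials. -/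
def negElectricField (i : ι) : ℝ × E → ℝ := ∂ₓ[b i] φ + ∂ₜ (a i)

lemma contDiffOn_negElectricField (hφ : ContDiffOn ℝ 2 φ (slab τ))
    (ha : ∀ i, ContDiffOn ℝ 2 (a i) (slab τ)) (i : ι) :
    ContDiffOn ℝ 1 (negElectricField b τ φ a i) (slab τ) :=
  (contDiffOn_dirDerivWithin uniqueDiffOn_slab hφ one_add_one_eq_two.le _).add
    (contDiffOn_dirDerivWithin uniqueDiffOn_slab (ha i) one_add_one_eq_two.le _)

lemma dirDerivWithin_time_lorentzGauge (hφ : IsWaveSolution b τ φ ρ)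
    (ha : ∀ i, ContDiffOn ℝ 2 (a i) (slab τ)) :
    EqOn (∂ₜ (lorentzGauge b τ φ a)) (ρ + ∑ i, ∂ₓ[b i] (negElectricField b τ φ a i))
      (slab τ) := by
  intro p hp
  have hS : UniqueDiffOn ℝ (slab τ : Set (ℝ × E)) := uniqueDiffOn_slab
  have hdiv : ∀ i ∈ Finset.univ, DifferentiableOn ℝ (∂ₓ[b i] (a i)) (slab τ) := fun i _ =>
    differentiableOn_dirDerivWithin hS (ha i) _
  have hfield : ∀ i, ∂ₓ[b i] (negElectricField b τ φ a i) p
      = ∂ₓ[b i] (∂ₓ[b i] φ) p + ∂ₜ (∂ₓ[b i] (a i)) p := fun i => by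
    rw [negElectricField, dirDerivWithin_add hS (differentiableOn_dirDerivWithin hS hφ.contDiffOn _)
      (differentiableOn_dirDerivWithin hS (ha i) _) _ hp, Pi.add_apply,
      dirDerivWithin_slab_comm (ha i) (1, 0) (0, b i) hp]
  rw [lorentzGauge, dirDerivWithin_add hS (differentiableOn_dirDerivWithin hS hφ.contDiffOn _)
    (.sum hdiv) _ hp, Pi.add_apply, dirDerivWithin_sum hS hdiv _ hp,
    hφ.wave_eq p hp]
  simp only [Pi.add_apply, Finset.sum_apply, hfield, Finset.sum_add_distrib]
  ring

lemma dirDerivWithin_time_negElectricField (hφ : ContDiffOn ℝ 2 φ (slab τ))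
    (ha : ∀ i, IsWaveSolution b τ (a i) (J i)) (i : ι) :
    EqOn (∂ₜ (negElectricField b τ φ a i))
      (∂ₓ[b i] (∂ₜ φ) + J i + ∑ j, ∂ₓ[b j] (∂ₓ[b j] (a i))) (slab τ) := by
  intro p hp
  rw [negElectricField, dirDerivWithin_add uniqueDiffOn_slab
    (differentiableOn_dirDerivWithin uniqueDiffOn_slab hφ _)
    (differentiableOn_dirDerivWithin uniqueDiffOn_slab (ha i).contDiffOn _) _ hp, Pi.add_apply,
    dirDerivWithin_slab_comm hφ _ _ hp, (ha i).wave_eq p hp]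
  simp only [Pi.add_apply, Finset.sum_apply]
  ring

variable [MeasureSpace E]

variable (b τ φ ρ a) in
/-- The defect `ρ - div E` in Gauss' law for the electric field `E = -∇φ - ∂ₜa`, mollified in space
by the test function `k`. The divergence is thrown onto `k`, so that the defect is `C¹`. -/
def gaussDefect (k : 𝓓((⊤ : TopologicalSpace.Opens E), ℝ)) : ℝ × E → ℝ :=
  k ⋆ₓ ρ + ∑ i, ∂_{b i} k ⋆ₓ negElectricField b τ φ a i

lemma contDiffOn_gaussDefect [OpensMeasurableSpace E]
    [IsFiniteMeasureOnCompacts (volume : Measure E)] (hφ : ContDiffOn ℝ 2 φ (slab τ))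
    (ha : ∀ i, ContDiffOn ℝ 2 (a i) (slab τ)) (hρ : ContDiffOn ℝ 1 ρ (slab τ))
    (k : 𝓓((⊤ : TopologicalSpace.Opens E), ℝ)) :
    ContDiffOn ℝ 1 (gaussDefect b τ φ ρ a k) (slab τ) := by
  rw [gaussDefect, Finset.sum_fn]
  exact (contDiffOn_spaceConv hρ).add <|
    .sum fun i _ => contDiffOn_spaceConv (contDiffOn_negElectricField hφ ha i)

lemma dirDerivWithin_gaussDefect [OpensMeasurableSpace E]
    [IsFiniteMeasureOnCompacts (volume : Measure E)] (hφ : ContDiffOn ℝ 2 φ (slab τ))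
    (ha : ∀ i, ContDiffOn ℝ 2 (a i) (slab τ)) (hρ : ContDiffOn ℝ 1 ρ (slab τ))
    (k : 𝓓((⊤ : TopologicalSpace.Opens E), ℝ)) (v : ℝ × E) :
    EqOn (dirDerivWithin (slab τ) v (gaussDefect b τ φ ρ a k))
      (k ⋆ₓ dirDerivWithin (slab τ) v ρ
        + ∑ i, ∂_{b i} k ⋆ₓ dirDerivWithin (slab τ) v (negElectricField b τ φ a i)) (slab τ) := by
  intro p hp
  have hE := contDiffOn_negElectricField (b := b) hφ ha
  have hconv : ∀ i ∈ Finset.univ,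
      DifferentiableOn ℝ (∂_{b i} k ⋆ₓ negElectricField b τ φ a i) (slab τ) := fun i _ =>
    (contDiffOn_spaceConv (hE i)).differentiableOn one_ne_zero
  rw [gaussDefect, dirDerivWithin_add uniqueDiffOn_slab
    ((contDiffOn_spaceConv hρ).differentiableOn one_ne_zero) (.sum hconv) v hp,
    Pi.add_apply, dirDerivWithin_sum uniqueDiffOn_slab hconv v hp, dirDerivWithin_spaceConv hρ v hp]
  simp only [Pi.add_apply, Finset.sum_apply, dirDerivWithin_spaceConv (hE _) v hp]

variable [FiniteDimensional ℝ E] [BorelSpace E] [(volume : Measure E).IsAddHaarMeasure]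

lemma dirDerivWithin_time_spaceConv_lorentzGauge (hφ : IsWaveSolution b τ φ ρ)
    (ha : ∀ i, ContDiffOn ℝ 2 (a i) (slab τ)) (hρ : ContinuousOn ρ (slab τ))
    (k : 𝓓((⊤ : TopologicalSpace.Opens E), ℝ)) :
    EqOn (∂ₜ (k ⋆ₓ lorentzGauge b τ φ a)) (gaussDefect b τ φ ρ a k) (slab τ) := by
  intro p hp
  have hE := contDiffOn_negElectricField (b := b) hφ.contDiffOn ha
  have hdiv : ∀ i ∈ Finset.univ,
      ContinuousOn (∂ₓ[b i] (negElectricField b τ φ a i)) (slab τ) := fun i _ =>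
    continuousOn_dirDerivWithin uniqueDiffOn_slab (hE i) _
  rw [dirDerivWithin_spaceConv (contDiffOn_lorentzGauge hφ.contDiffOn ha) _ hp,
    spaceConv_congr (dirDerivWithin_time_lorentzGauge hφ ha) hp,
    spaceConv_add_sum hρ hdiv hp]
  simp only [spaceConv_dirDerivWithin_space (hE _) _ hp, gaussDefect, Pi.add_apply,
    Finset.sum_apply]

lemma dirDerivWithin_space_gaussDefect (hφ : ContDiffOn ℝ 2 φ (slab τ))
    (ha : ∀ i, ContDiffOn ℝ 2 (a i) (slab τ)) (hρ : ContDiffOn ℝ 1 ρ (slab τ))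
    (k : 𝓓((⊤ : TopologicalSpace.Opens E), ℝ)) (e : E) :
    EqOn (∂ₓ[e] (gaussDefect b τ φ ρ a k)) (gaussDefect b τ φ ρ a (∂_{e} k)) (slab τ) := by
  intro p hp
  rw [dirDerivWithin_gaussDefect hφ ha hρ k _ hp]
  simp only [gaussDefect, Pi.add_apply, Finset.sum_apply, spaceConv_dirDerivWithin_space hρ e hp,
    spaceConv_dirDerivWithin_space (contDiffOn_negElectricField hφ ha _) e hp,
    lineDerivOp_testFunction_comm k e]

lemma spaceConv_time_negElectricField (hφ : ContDiffOn ℝ 2 φ (slab τ))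
    (ha : ∀ i, IsWaveSolution b τ (a i) (J i)) (hJ : ∀ i, ContDiffOn ℝ 1 (J i) (slab τ))
    (k : 𝓓((⊤ : TopologicalSpace.Opens E), ℝ)) (i : ι) (hp : p ∈ slab τ) :
    (∂_{b i} k ⋆ₓ ∂ₜ (negElectricField b τ φ a i)) p
      = (∂_{b i} (∂_{b i} k) ⋆ₓ ∂ₜ φ) p + ∑ j, (∂_{b j} (∂_{b j} k) ⋆ₓ ∂ₓ[b i] (a i)) p
        + (k ⋆ₓ ∂ₓ[b i] (J i)) p := by
  have hS : UniqueDiffOn ℝ (slab τ : Set (ℝ × E)) := uniqueDiffOn_slab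
  have hφt : ContDiffOn ℝ 1 (∂ₜ φ) (slab τ) :=
    contDiffOn_dirDerivWithin hS hφ one_add_one_eq_two.le _
  have hax : ∀ j, ContDiffOn ℝ 1 (∂ₓ[b j] (a i)) (slab τ) := fun j =>
    contDiffOn_dirDerivWithin hS (ha i).contDiffOn one_add_one_eq_two.le _
  have hlap : ∀ j ∈ Finset.univ, ContinuousOn (∂ₓ[b j] (∂ₓ[b j] (a i))) (slab τ) := fun j _ =>
    continuousOn_dirDerivWithin hS (hax j) _
  have hφtx : ContinuousOn (∂ₓ[b i] (∂ₜ φ)) (slab τ) := continuousOn_dirDerivWithin hS hφt _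
  have hswap : ∀ j, (∂_{b i} k ⋆ₓ ∂ₓ[b j] (∂ₓ[b j] (a i))) p
      = (∂_{b j} (∂_{b j} k) ⋆ₓ ∂ₓ[b i] (a i)) p := fun j => by
    have ha1 : ContDiffOn ℝ 1 (a i) (slab τ) := (ha i).contDiffOn.of_le one_le_two
    rw [spaceConv_dirDerivWithin_space (hax j) _ hp, spaceConv_dirDerivWithin_space ha1 _ hp,
      spaceConv_dirDerivWithin_space ha1 _ hp, lineDerivOp_testFunction_comm k (b j),
      lineDerivOp_testFunction_comm _ (b j) (b i)]
  rw [spaceConv_congr (dirDerivWithin_time_negElectricField hφ ha i) hp,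
    spaceConv_add_sum (hφtx.add (hJ i).continuousOn) hlap hp,
    spaceConv_add hφtx (hJ i).continuousOn hp, spaceConv_dirDerivWithin_space hφt _ hp,
    spaceConv_dirDerivWithin_space (hJ i) _ hp, add_right_comm]
  simp only [hswap]

lemma dirDerivWithin_time_gaussDefect (hφ : ContDiffOn ℝ 2 φ (slab τ))
    (ha : ∀ i, IsWaveSolution b τ (a i) (J i)) (hρ : ContDiffOn ℝ 1 ρ (slab τ))
    (hJ : ∀ i, ContDiffOn ℝ 1 (J i) (slab τ))
    (hcons : ∀ p ∈ slab τ, ∂ₜ ρ p + ∑ i, ∂ₓ[b i] (J i) p = 0)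
    (k : 𝓓((⊤ : TopologicalSpace.Opens E), ℝ)) :
    EqOn (∂ₜ (gaussDefect b τ φ ρ a k))
      (∑ i, ∂_{b i} (∂_{b i} k) ⋆ₓ lorentzGauge b τ φ a) (slab τ) := by
  intro p hp
  have hS : UniqueDiffOn ℝ (slab τ : Set (ℝ × E)) := uniqueDiffOn_slab
  have hφt : ContinuousOn (∂ₜ φ) (slab τ) :=
    continuousOn_dirDerivWithin hS (hφ.of_le one_le_two) _
  have hax : ∀ i ∈ Finset.univ, ContinuousOn (∂ₓ[b i] (a i)) (slab τ) := fun i _ =>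
    continuousOn_dirDerivWithin hS ((ha i).contDiffOn.of_le one_le_two) _
  have hJx : ∀ i ∈ Finset.univ, ContinuousOn (∂ₓ[b i] (J i)) (slab τ) := fun i _ =>
    continuousOn_dirDerivWithin hS (hJ i) _
  have hcharge : (k ⋆ₓ ∂ₜ ρ) p + ∑ i, (k ⋆ₓ ∂ₓ[b i] (J i)) p = 0 := by
    rw [← spaceConv_add_sum (continuousOn_dirDerivWithin hS hρ _) hJx hp,
      spaceConv_congr (h := 0) (fun q hq => by simpa using hcons q hq) hp]
    simp [spaceConv]
  have hgauge : ∀ i, (∂_{b i} (∂_{b i} k) ⋆ₓ lorentzGauge b τ φ a) p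
      = (∂_{b i} (∂_{b i} k) ⋆ₓ ∂ₜ φ) p
        + ∑ j, (∂_{b i} (∂_{b i} k) ⋆ₓ ∂ₓ[b j] (a j)) p := fun i => by
    rw [lorentzGauge, spaceConv_add_sum hφt hax hp]
  rw [dirDerivWithin_gaussDefect hφ (fun i => (ha i).contDiffOn) hρ k _ hp]
  simp only [Pi.add_apply, Finset.sum_apply, spaceConv_time_negElectricField hφ ha hJ k _ hp,
    hgauge, Finset.sum_add_distrib]
  rw [Finset.sum_comm]
  linarith [hcharge]

lemma gaussDefect_eq_zero (hφ : IsWaveSolution b τ φ ρ)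
    (ha : ∀ i, IsWaveSolution b τ (a i) (J i)) (hρ : ContDiffOn ℝ 1 ρ (slab τ))
    (hJ : ∀ i, ContDiffOn ℝ 1 (J i) (slab τ))
    (hcons : ∀ p ∈ slab τ, ∂ₜ ρ p + ∑ i, ∂ₓ[b i] (J i) p = 0)
    (hinit : ∀ x, lorentzGauge b τ φ a (0, x) = 0)
    (hinitt : ∀ x, ∂ₜ (lorentzGauge b τ φ a) (0, x) = 0)
    (k : 𝓓((⊤ : TopologicalSpace.Opens E), ℝ)) :
    ∀ p ∈ slab τ, gaussDefect b τ φ ρ a k p = 0 := by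
  have haC : ∀ i, ContDiffOn ℝ 2 (a i) (slab τ) := fun i => (ha i).contDiffOn
  have hG : ContDiffOn ℝ 1 (lorentzGauge b τ φ a) (slab τ) :=
    contDiffOn_lorentzGauge hφ.contDiffOn haC
  have hGt := dirDerivWithin_time_spaceConv_lorentzGauge hφ haC hρ.continuousOn
  intro p hp
  refine eq_zero_of_symmetric_hyperbolic (b := b) (contDiffOn_gaussDefect hφ.contDiffOn haC hρ k)
    (W := fun i => ∂_{b i} k ⋆ₓ lorentzGauge b τ φ a) (fun i => contDiffOn_spaceConv hG)
    (fun q hq => ?_) (fun i q hq => ?_) (fun x => ?_)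
    (fun i x => spaceConv_initial_eq_zero hinit x) p hp
  · rw [dirDerivWithin_time_gaussDefect hφ.contDiffOn ha hρ hJ hcons k hq, Finset.sum_apply]
    refine Finset.sum_congr rfl fun i _ => ?_
    rw [dirDerivWithin_spaceConv hG _ hq, spaceConv_dirDerivWithin_space hG _ hq]
  · rw [hGt _ hq, dirDerivWithin_space_gaussDefect hφ.contDiffOn haC hρ k _ hq]
  · have hp0 : ((0 : ℝ), x) ∈ slab τ := ⟨⟨le_rfl, hp.1.1.trans_lt hp.1.2⟩, mem_univ x⟩
    rw [← hGt k hp0, dirDerivWithin_spaceConv hG _ hp0, spaceConv_initial_eq_zero hinitt]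

lemma eq_zero_of_forall_spaceConv_eq_zero {g : ℝ × E → ℝ} (hg : ContinuousOn g (slab τ))
    (hconv : ∀ k : 𝓓((⊤ : TopologicalSpace.Opens E), ℝ), ∀ p ∈ slab τ, (k ⋆ₓ g) p = 0) :
    ∀ p ∈ slab τ, g p = 0 := by
  intro p hp
  have hcont : Continuous fun z => g (p - (0, z)) :=
    hg.comp_continuous (by fun_prop) fun z => sub_zero_mk_mem_slab hp z
  have hae : ∀ᵐ z : E, g (p - (0, z)) = 0 :=
    ae_eq_zero_of_integral_contDiff_smul_eq_zero hcont.locallyIntegrable fun k hk hkc =>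
      hconv ⟨k, hk, hkc, subset_univ _⟩ p hp
  simpa [Prod.mk_zero_zero] using congr_fun (hcont.ae_eq_iff_eq volume continuous_const |>.1 hae) 0

lemma lorentzGauge_eq_zero (hφ : IsWaveSolution b τ φ ρ)
    (ha : ∀ i, IsWaveSolution b τ (a i) (J i)) (hρ : ContDiffOn ℝ 1 ρ (slab τ))
    (hJ : ∀ i, ContDiffOn ℝ 1 (J i) (slab τ))
    (hcons : ∀ p ∈ slab τ, ∂ₜ ρ p + ∑ i, ∂ₓ[b i] (J i) p = 0)
    (hinit : ∀ x, lorentzGauge b τ φ a (0, x) = 0)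
    (hinitt : ∀ x, ∂ₜ (lorentzGauge b τ φ a) (0, x) = 0) :
    ∀ p ∈ slab τ, lorentzGauge b τ φ a p = 0 := by
  have haC : ∀ i, ContDiffOn ℝ 2 (a i) (slab τ) := fun i => (ha i).contDiffOn
  have hG : ContDiffOn ℝ 1 (lorentzGauge b τ φ a) (slab τ) :=
    contDiffOn_lorentzGauge hφ.contDiffOn haC
  refine eq_zero_of_forall_spaceConv_eq_zero hG.continuousOn fun k p hp => ?_
  rw [eq_initial_of_dirDerivWithin_time_eq_zero
    ((contDiffOn_spaceConv hG).differentiableOn one_ne_zero) (fun q hq => ?_) p hp]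
  · exact spaceConv_initial_eq_zero hinit p.2
  · rw [dirDerivWithin_time_spaceConv_lorentzGauge hφ haC hρ.continuousOn k hq]
    exact gaussDefect_eq_zero hφ ha hρ hJ hcons hinit hinitt k q hq

end LorentzGauge

section Moment

variable {E Z F : Type*} [NormedAddCommGroup F] [NormedSpace ℝ F] {τ r : ℝ}
  {f : ℝ → E → Z → ℝ} {w : Z → F}

/-- The moment `∫ f(t,x,ξ) w(ξ) dξ` of a phase-space density. The charge density and the scalar
potential are the moments for `w = 1`, the current density and the self-consistent part of the
vector potential those for `w = vrel`. -/
def moment [MeasureSpace Z] (w : Z → F) (f : ℝ → E → Z → ℝ) (p : ℝ × E) : F :=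
  ∫ ξ, f p.1 p.2 ξ • w ξ

lemma moment_initial_eq_zero [MeasureSpace Z] (hf : ∀ x ξ, f 0 x ξ = 0) (x : E) :
    moment w f (0, x) = 0 := by
  simp [moment, hf]

variable [NormedAddCommGroup Z]

lemma smul_eq_zero_of_notMem_closedBall (hf : ∀ t ∈ Ico 0 τ, ∀ x ξ, r < ‖ξ‖ → f t x ξ = 0) :
    ∀ p ∈ slab τ, ∀ ξ ∉ closedBall (0 : Z) r, f p.1 p.2 ξ • w ξ = 0 := fun p hp ξ hξ => by
  rw [mem_closedBall_zero_iff, not_le] at hξ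
  rw [hf p.1 hp.1 p.2 ξ hξ, zero_smul]

variable [NormedAddCommGroup E] [NormedSpace ℝ E] [NormedSpace ℝ Z]

lemma contDiffOn_smul_velocity {n : WithTop ℕ∞}
    (hf : ContDiffOn ℝ n (fun p : ℝ × E × Z => f p.1 p.2.1 p.2.2) (Ico 0 τ ×ˢ univ))
    (hw : ContDiff ℝ n w) :
    ContDiffOn ℝ n (fun q : (ℝ × E) × Z => f q.1.1 q.1.2 q.2 • w q.2) (slab τ ×ˢ univ) :=
  (hf.comp (g := fun p : ℝ × E × Z => f p.1 p.2.1 p.2.2)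
    (f := fun q : (ℝ × E) × Z => (q.1.1, q.1.2, q.2)) (ContDiff.contDiffOn (by fun_prop))
    fun q hq => ⟨hq.1.1, mem_univ _⟩).smul (hw.comp contDiff_snd).contDiffOn

lemma contDiffOn_slice_velocity {n : WithTop ℕ∞}
    (hf : ContDiffOn ℝ n (fun p : ℝ × E × Z => f p.1 p.2.1 p.2.2) (Ico 0 τ ×ˢ univ)) (ξ : Z) :
    ContDiffOn ℝ n (fun p : ℝ × E => f p.1 p.2 ξ) (slab τ) :=
  hf.comp (f := fun p : ℝ × E => (p.1, p.2, ξ)) (ContDiff.contDiffOn (by fun_prop))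
    fun p hp => ⟨hp.1, mem_univ _⟩

variable [FiniteDimensional ℝ Z] [MeasureSpace Z] [OpensMeasurableSpace Z]
  [IsFiniteMeasureOnCompacts (volume : Measure Z)]

lemma contDiffOn_one_moment
    (hf : ContDiffOn ℝ 1 (fun p : ℝ × E × Z => f p.1 p.2.1 p.2.2) (Ico 0 τ ×ˢ univ))
    (hfr : ∀ t ∈ Ico 0 τ, ∀ x ξ, r < ‖ξ‖ → f t x ξ = 0) (hw : ContDiff ℝ 1 w) :
    ContDiffOn ℝ 1 (moment w f) (slab τ) :=
  contDiffOn_one_marginal convex_slab uniqueDiffOn_slab (isCompact_closedBall 0 r)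
    (contDiffOn_smul_velocity hf hw) (smul_eq_zero_of_notMem_closedBall hfr)

lemma dirDerivWithin_time_moment_initial_eq_zero (hτ : 0 < τ)
    (hf : ContDiffOn ℝ 1 (fun p : ℝ × E × Z => f p.1 p.2.1 p.2.2) (Ico 0 τ ×ˢ univ))
    (hfr : ∀ t ∈ Ico 0 τ, ∀ x ξ, r < ‖ξ‖ → f t x ξ = 0) (hw : ContDiff ℝ 1 w)
    (hinit : ∀ x ξ, timeD (fun s => f s x ξ) 0 = 0) (x : E) :
    dirDerivWithin (slab τ) (1, 0) (moment w f) (0, x) = 0 := by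
  have h0 : (0 : ℝ) ∈ Ico 0 τ := ⟨le_rfl, hτ⟩
  have hp : ((0 : ℝ), x) ∈ slab τ := ⟨h0, mem_univ x⟩
  have hU := contDiffOn_smul_velocity hf hw
  refine (dirDerivWithin_marginal convex_slab uniqueDiffOn_slab (isCompact_closedBall 0 r)
    hU (smul_eq_zero_of_notMem_closedBall hfr) (1, 0) hp).trans
      (integral_eq_zero_of_ae (.of_forall fun ξ => ?_))
  have hslice : DifferentiableOn ℝ (fun p : ℝ × E => f p.1 p.2 ξ) (slab τ) :=
    (contDiffOn_slice_velocity hf ξ).differentiableOn one_ne_zero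
  have hzero : dirDerivWithin (slab τ) (1, 0) (fun p : ℝ × E => f p.1 p.2 ξ) (0, x) = 0 :=
    ((hasDerivWithinAt_time hslice h0).derivWithin (uniqueDiffOn_Ici 0 0 self_mem_Ici)).symm.trans
      (hinit x ξ)
  have hclm := dirDerivWithin_clm_comp uniqueDiffOn_slab
    ((ContinuousLinearMap.id ℝ ℝ).smulRight (w ξ)) hslice (1, 0) hp
  rw [Function.comp_apply, hzero, map_zero] at hclm
  exact (dirDerivWithin_slice_left uniqueDiffOn_slab hp ξ (hU.differentiableOn one_ne_zero)
    (1, 0)).symm.trans hclm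

end Moment

section WaveMoment

variable {ι E Z F : Type*} [Fintype ι] [NormedAddCommGroup E] [InnerProductSpace ℝ E]
  [NormedAddCommGroup Z] [NormedSpace ℝ Z] [FiniteDimensional ℝ Z] [MeasureSpace Z]
  [OpensMeasurableSpace Z] [IsFiniteMeasureOnCompacts (volume : Measure Z)]
  [NormedAddCommGroup F] [NormedSpace ℝ F] {b : OrthonormalBasis ι ℝ E} {τ r : ℝ}
  {f u : ℝ → E → Z → ℝ} {w : Z → F}

lemma isWaveSolution_moment
    (hu : ContDiffOn ℝ 2 (fun p : ℝ × E × Z => u p.1 p.2.1 p.2.2) (Ico 0 τ ×ˢ univ))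
    (hur : ∀ t ∈ Ico 0 τ, ∀ x ξ, r < ‖ξ‖ → u t x ξ = 0) (hw : ContDiff ℝ 2 w)
    (hwave : ∀ ξ, IsWaveSolution b τ (fun p => u p.1 p.2 ξ) fun p => f p.1 p.2 ξ) :
    IsWaveSolution b τ (moment w u) (moment w f) :=
  .marginal (U := fun q => u q.1.1 q.1.2 q.2 • w q.2) (Q := fun q => f q.1.1 q.1.2 q.2 • w q.2)
    (isCompact_closedBall 0 r) (contDiffOn_smul_velocity hu hw)
    (smul_eq_zero_of_notMem_closedBall hur) fun ξ =>
      (hwave ξ).clm_comp ((ContinuousLinearMap.id ℝ ℝ).smulRight (w ξ))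

end WaveMoment

section LienardWiechert

open EuclideanSpace (basisFun proj)

variable {τ r t : ℝ} {f u : ℝ → E3 → E3 → ℝ} {Ein AI : E3 → E3} {A0 : ℝ → E3 → E3}
  {φ ρ : ℝ × E3 → ℝ} {A J : ℝ × E3 → E3} {x : E3}

local notation "∂ₜ" => dirDerivWithin (slab τ) (1, 0)
local notation "∂ₓ[" e "]" => dirDerivWithin (slab τ) (0, e)
local notation "𝐞" => basisFun (Fin 3) ℝ

lemma contDiff_vrel {n : WithTop ℕ∞} : ContDiff ℝ n vrel :=
  (((contDiff_const.add (contDiff_id.norm_sq ℝ)).sqrt fun ξ => by positivity).inv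
    fun ξ => by positivity).smul contDiff_id

lemma timeD_eq_dirDerivWithin {F : Type*} [NormedAddCommGroup F] [NormedSpace ℝ F]
    {g : ℝ × E3 → F} (hg : DifferentiableOn ℝ g (slab τ)) (ht : t ∈ Ico 0 τ) :
    timeD (fun s => g (s, x)) t = ∂ₜ g (t, x) :=
  (hasDerivWithinAt_time hg ht).derivWithin (uniqueDiffOn_Ici 0 t ht.1)

lemma divg_eq_sum_dirDerivWithin (hA : DifferentiableOn ℝ A (slab τ)) (ht : t ∈ Ico 0 τ) :
    divg (fun y => A (t, y)) x = ∑ i, ∂ₓ[𝐞 i] (proj i ∘ A) (t, x) := by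
  have hcoord : ∀ i : Fin 3, DifferentiableOn ℝ ((proj i : E3 →L[ℝ] ℝ) ∘ A) (slab τ) := fun i =>
    (proj i : E3 →L[ℝ] ℝ).differentiable.comp_differentiableOn hA
  simp only [divg, pd3, e3, ← fderiv_slice_right (hcoord _) ht, EuclideanSpace.basisFun_apply]
  rfl

lemma timeD_add_divg_eq_lorentzGauge (hφ : DifferentiableOn ℝ φ (slab τ))
    (hA : DifferentiableOn ℝ A (slab τ)) (ht : t ∈ Ico 0 τ) :
    timeD (fun s => φ (s, x)) t + divg (fun y => A (t, y)) x
      = lorentzGauge 𝐞 τ φ (fun i => proj i ∘ A) (t, x) := by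
  rw [timeD_eq_dirDerivWithin hφ ht, divg_eq_sum_dirDerivWithin hA ht]
  simp only [lorentzGauge, Pi.add_apply, Finset.sum_apply]

lemma charge_conservation_slab (hρ : ContDiffOn ℝ 1 ρ (slab τ)) (hJ : ContDiffOn ℝ 1 J (slab τ))
    (hcons : ∀ t ∈ Ioo 0 τ, ∀ x,
      deriv (fun s => ρ (s, x)) t + divg (fun y => J (t, y)) x = 0) :
    ∀ p ∈ slab τ, ∂ₜ ρ p + ∑ i, ∂ₓ[𝐞 i] (proj i ∘ J) p = 0 := by
  have hcoord : ∀ i : Fin 3, ContDiffOn ℝ 1 ((proj i : E3 →L[ℝ] ℝ) ∘ J) (slab τ) := fun i =>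
    (proj i : E3 →L[ℝ] ℝ).contDiff.comp_contDiffOn hJ
  refine eqOn_slab_of_eqOn_interior ((continuousOn_dirDerivWithin uniqueDiffOn_slab hρ _).add <|
    continuousOn_finsetSum _ fun i _ => continuousOn_dirDerivWithin uniqueDiffOn_slab (hcoord i) _)
    continuousOn_const fun t ht x => ?_
  rw [← divg_eq_sum_dirDerivWithin (hJ.differentiableOn one_ne_zero) (Ioo_subset_Ico_self ht),
    ← (hasDerivAt_time (hρ.differentiableOn one_ne_zero) ht).deriv]
  exact hcons t ht x

lemma dirDerivWithin_time_lorentzGauge_initial_eq_zero (hτ : 0 < τ)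
    (hφ : IsWaveSolution 𝐞 τ φ ρ) (hA : ContDiffOn ℝ 2 A (slab τ)) (hφ0 : ∀ x, φ (0, x) = 0)
    (hA0t : ∀ x, ∂ₜ A (0, x) = -Ein x) (hgauss : ∀ x, divg Ein x = ρ (0, x)) (x : E3) :
    ∂ₜ (lorentzGauge 𝐞 τ φ fun i => proj i ∘ A) (0, x) = 0 := by
  have h0 : (0 : ℝ) ∈ Ico 0 τ := ⟨le_rfl, hτ⟩
  have hslab : ∀ y : E3, ((0 : ℝ), y) ∈ slab τ := fun y => ⟨h0, mem_univ y⟩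
  have hcoord : ∀ i : Fin 3, ContDiffOn ℝ 2 ((proj i : E3 →L[ℝ] ℝ) ∘ A) (slab τ) := fun i =>
    (proj i : E3 →L[ℝ] ℝ).contDiff.comp_contDiffOn hA
  have hfield : ∀ i y, negElectricField 𝐞 τ φ (fun i => proj i ∘ A) i (0, y) = -Ein y i :=
    fun i y => by
      rw [negElectricField, Pi.add_apply,
        ← fderiv_slice_right (hφ.contDiffOn.differentiableOn two_ne_zero) h0,
        dirDerivWithin_clm_comp uniqueDiffOn_slab _ (hA.differentiableOn two_ne_zero) _ (hslab y),
        Function.comp_apply, hA0t]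
      simp [hφ0]
  have hdiv : ∀ i, ∂ₓ[𝐞 i] (negElectricField 𝐞 τ φ (fun i => proj i ∘ A) i) (0, x)
      = -pd3 (fun y => Ein y i) i x := fun i => by
    rw [← fderiv_slice_right ((contDiffOn_negElectricField hφ.contDiffOn hcoord
      i).differentiableOn one_ne_zero) h0]
    simp only [hfield, fderiv_fun_neg, neg_apply, EuclideanSpace.basisFun_apply, pd3, e3]
  rw [dirDerivWithin_time_lorentzGauge hφ hcoord (hslab x), Pi.add_apply, Finset.sum_apply]
  simp only [hdiv, Finset.sum_neg_distrib, ← hgauss, divg, add_neg_cancel]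

lemma timeD_add_divg_eq_zero (hφ : IsWaveSolution 𝐞 τ φ ρ) (hA : IsWaveSolution 𝐞 τ A J)
    (hρ : ContDiffOn ℝ 1 ρ (slab τ)) (hJ : ContDiffOn ℝ 1 J (slab τ))
    (hcons : ∀ t ∈ Ioo 0 τ, ∀ x, deriv (fun s => ρ (s, x)) t + divg (fun y => J (t, y)) x = 0)
    (hφ0 : ∀ x, φ (0, x) = 0) (hφ0t : ∀ x, ∂ₜ φ (0, x) = 0)
    (hA0 : ∀ x, divg (fun y => A (0, y)) x = 0) (hA0t : ∀ x, ∂ₜ A (0, x) = -Ein x)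
    (hgauss : ∀ x, divg Ein x = ρ (0, x)) (ht : t ∈ Ico 0 τ) (x : E3) :
    timeD (fun s => φ (s, x)) t + divg (fun y => A (t, y)) x = 0 := by
  have hτ : 0 < τ := ht.1.trans_lt ht.2
  have hφd : DifferentiableOn ℝ φ (slab τ) := hφ.contDiffOn.differentiableOn two_ne_zero
  have hAd : DifferentiableOn ℝ A (slab τ) := hA.contDiffOn.differentiableOn two_ne_zero
  have hinit : ∀ x, lorentzGauge 𝐞 τ φ (fun i => proj i ∘ A) (0, x) = 0 := fun x => by
    rw [← timeD_add_divg_eq_lorentzGauge hφd hAd ⟨le_rfl, hτ⟩,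
      timeD_eq_dirDerivWithin hφd ⟨le_rfl, hτ⟩, hφ0t, hA0, add_zero]
  rw [timeD_add_divg_eq_lorentzGauge hφd hAd ht]
  exact lorentzGauge_eq_zero hφ (fun i => hA.clm_comp (proj i)) hρ
    (fun i => (proj i : E3 →L[ℝ] ℝ).contDiff.comp_contDiffOn hJ)
    (charge_conservation_slab hρ hJ hcons) hinit
    (dirDerivWithin_time_lorentzGauge_initial_eq_zero hτ hφ hA.contDiffOn hφ0 hA0t hgauss)
    _ ⟨ht, mem_univ x⟩

lemma dirDerivWithin_time_AP_initial (hτ : 0 < τ)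
    (hu : ContDiffOn ℝ 2 (fun p : ℝ × E3 × E3 => u p.1 p.2.1 p.2.2) (Ico 0 τ ×ˢ univ))
    (hur : ∀ t ∈ Ico 0 τ, ∀ x ξ, r < ‖ξ‖ → u t x ξ = 0)
    (hut : ∀ x ξ, timeD (fun s => u s x ξ) 0 = 0)
    (hA0 : ContDiffOn ℝ 2 (fun p : ℝ × E3 => A0 p.1 p.2) (slab τ))
    (hA0t : ∀ x, timeD (fun s => A0 s x) 0 = -Ein x) (x : E3) :
    ∂ₜ (fun p => AP A0 u p.1 p.2) (0, x) = -Ein x := by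
  have h0 : (0 : ℝ) ∈ Ico 0 τ := ⟨le_rfl, hτ⟩
  have hA0d := hA0.differentiableOn two_ne_zero
  have hu1 := hu.of_le one_le_two
  have hadd := dirDerivWithin_add uniqueDiffOn_slab hA0d
    ((contDiffOn_one_moment hu1 hur contDiff_vrel).differentiableOn one_ne_zero) (1, 0)
    (x := ((0 : ℝ), x)) ⟨h0, mem_univ x⟩
  rw [Pi.add_apply, dirDerivWithin_time_moment_initial_eq_zero hτ hu1 hur contDiff_vrel hut,
    add_zero, ← timeD_eq_dirDerivWithin hA0d h0, hA0t] at hadd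
  exact hadd

lemma phiP_eq_moment : (fun p => phiP u p.1 p.2) = moment (fun _ => (1 : ℝ)) u := by
  ext p
  simp [phiP, moment]

lemma AP_eq_add_moment : (fun p => AP A0 u p.1 p.2) = (fun p => A0 p.1 p.2) + moment vrel u := rfl

end LienardWiechert

/-- **Lorentz gauge condition for the Lienard--Wiechert potentials**: with
`φ = ∫ u dξ` and `A = A⁰ + ∫ v(ξ) u dξ`, one has `∂ₜφ + divₓA = 0` on `[0,τ)×ℝ³`. -/
theorem lorentz_gauge_condition
    (τ r : ℝ) (hτ : 0 < τ) (hr : 0 < r)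
    (f u : ℝ → E3 → E3 → ℝ) (Ein AI : E3 → E3) (A0 : ℝ → E3 → E3)
    -- `f` is `C¹` on `[0,τ)×ℝ³×ℝ³`, vanishes for `|ξ| > r`, and satisfies the local
    -- conservation law `∂ₜρ_f + divₓ j_f = 0`
    (hfreg : ContDiffOn ℝ 1 (fun p : ℝ × E3 × E3 => f p.1 p.2.1 p.2.2)
      (Set.Ico 0 τ ×ˢ (Set.univ : Set (E3 × E3))))
    (hfsupp : ∀ t ∈ Set.Ico 0 τ, ∀ x ξ : E3, r < ‖ξ‖ → f t x ξ = 0)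
    (hcons : ∀ t ∈ Set.Ioo 0 τ, ∀ x : E3,
      deriv (fun s => ∫ ξ : E3, f s x ξ) t
        + divg (fun y => ∫ ξ : E3, f t y ξ • vrel ξ) x = 0)
    -- `u` is `C²` on `[0,τ)×ℝ³×ℝ³`, vanishes for `|ξ| > r`, and solves, for each fixed
    -- `ξ`, the wave equation `∂ₜ²u - Δₓu = f` with vanishing initial data
    (hureg : ContDiffOn ℝ 2 (fun p : ℝ × E3 × E3 => u p.1 p.2.1 p.2.2)
      (Set.Ico 0 τ ×ˢ (Set.univ : Set (E3 × E3))))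
    (husupp : ∀ t ∈ Set.Ico 0 τ, ∀ x ξ : E3, r < ‖ξ‖ → u t x ξ = 0)
    (huwave : ∀ ξ : E3, ∀ t ∈ Set.Ioo 0 τ, ∀ x : E3,
      deriv (fun s => deriv (fun s' => u s' x ξ) s) t - lapx (fun y => u t y ξ) x = f t x ξ)
    (hu0 : ∀ x ξ : E3, u 0 x ξ = 0)
    (hu0t : ∀ x ξ : E3, timeD (fun s => u s x ξ) 0 = 0)
    -- the initial electric field is `C²` and compatible with `ρ_f(0)`
    (hEinreg : ContDiff ℝ 2 Ein)
    (hdivEin : ∀ x : E3, divg Ein x = ∫ ξ : E3, f 0 x ξ)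
    -- `A_I` is `C²` and divergence free
    (hAIreg : ContDiff ℝ 2 AI)
    (hdivAI : ∀ x : E3, divg AI x = 0)
    -- `A⁰` is `C²` and solves the homogeneous wave equation with data `(A_I, -E^in)`
    (hA0reg : ContDiffOn ℝ 2 (fun p : ℝ × E3 => A0 p.1 p.2)
      (Set.Ico 0 τ ×ˢ (Set.univ : Set E3)))
    (hA0wave : ∀ t ∈ Set.Ioo 0 τ, ∀ x : E3,
      deriv (fun s => deriv (fun s' => A0 s' x) s) t - lapxV (A0 t) x = 0)
    (hA00 : ∀ x : E3, A0 0 x = AI x)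
    (hA00t : ∀ x : E3, timeD (fun s => A0 s x) 0 = -Ein x)
 :
    ∀ t ∈ Set.Ico 0 τ, ∀ x : E3,
      timeD (fun s => phiP u s x) t + divg (AP A0 u t) x = 0 := by
  have hwave : ∀ ξ, IsWaveSolution (EuclideanSpace.basisFun (Fin 3) ℝ) τ (fun p => u p.1 p.2 ξ)
      fun p => f p.1 p.2 ξ := fun ξ =>
    .of_deriv_deriv (contDiffOn_slice_velocity hureg ξ)
      (contDiffOn_slice_velocity hfreg ξ).continuousOn (by simpa [lapx, e3] using huwave ξ)
  have hA0 : IsWaveSolution (EuclideanSpace.basisFun (Fin 3) ℝ) τ (fun p => A0 p.1 p.2) 0 :=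
    .of_deriv_deriv hA0reg continuousOn_const (by simpa [lapxV, e3] using hA0wave)
  have hφ := isWaveSolution_moment (w := fun _ => (1 : ℝ)) hureg husupp contDiff_const hwave
  have hA := hA0.add (isWaveSolution_moment hureg husupp contDiff_vrel hwave)
  rw [← AP_eq_add_moment, zero_add] at hA
  have hu1 := hureg.of_le one_le_two
  have hAI : AP A0 u 0 = AI := by
    ext1 x
    simp [AP, hu0, hA00]
  intro t ht x
  have hgauge := timeD_add_divg_eq_zero hφ hA (contDiffOn_one_moment hfreg hfsupp contDiff_const)
    (contDiffOn_one_moment hfreg hfsupp contDiff_vrel) (by simpa [moment] using hcons)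
    (moment_initial_eq_zero hu0)
    (dirDerivWithin_time_moment_initial_eq_zero hτ hu1 husupp contDiff_const hu0t)
    (by simpa [hAI] using hdivAI)
    (dirDerivWithin_time_AP_initial hτ hureg husupp hu0t hA0reg hA00t)
    (by simpa [moment] using hdivEin) ht x
  rwa [← phiP_eq_moment] at hgauge
end
end

section
/- First cone identity for the streaming operator: let v ∈ ℝ³ with |v| < 1. Then for every φ ∈ C_c^∞(ℝ⁴), ⟨Y, (t − x·v) ∂_t φ⟩ = ⟨Y, t (∂_t + v·∇_x) φ⟩; that is, (t − x·v) ∂_t Y = t T Y in the sense of distributions on ℝ⁴, where T = ∂_t + v·∇_x. -/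
open MeasureTheory Real Set Filter Metric RealInnerProductSpace
open scoped ENNReal NNReal Topology

noncomputable section

/-- The rotation invariant surface measure on the unit sphere `S² ⊂ ℝ³`
(with total mass `4π`). -/
def sphMeasure : Measure (Metric.sphere (0 : E3) 1) := (volume : Measure E3).toSphere

/-- The forward fundamental solution `Y` of the d'Alembertian in `1+3` dimensions, as a
measure on `ℝ⁴ = ℝₜ × ℝ³ₓ`: it acts on a function `φ` by
`⟨Y,φ⟩ = ∫₀^∞ (1/(4πt)) ∫_{|x|=t} φ(t,x) dσ_t(x) dt
       = ∫₀^∞ (t/(4π)) ∫_{S²} φ(t,tω) dσ(ω) dt`. -/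
def Ymeas : Measure (ℝ × E3) :=
  Measure.map (fun q : ℝ × Metric.sphere (0 : E3) 1 => (q.1, q.1 • (q.2 : E3)))
    ((((volume : Measure ℝ).restrict (Set.Ioi 0)).withDensity
        fun t => ENNReal.ofReal (t / (4 * Real.pi))).prod sphMeasure)

/-- Time derivative `∂ₜ` of a function on `ℝ⁴ = ℝₜ × ℝ³ₓ`. -/
def dt4 (g : ℝ × E3 → ℝ) (p : ℝ × E3) : ℝ := fderiv ℝ g p ((1 : ℝ), (0 : E3))

/-- Spatial partial derivative `∂_{x_i}` of a function on `ℝ⁴ = ℝₜ × ℝ³ₓ`. -/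
def dx4 (i : Fin 3) (g : ℝ × E3 → ℝ) (p : ℝ × E3) : ℝ := fderiv ℝ g p ((0 : ℝ), e3 i)

/-- The streaming operator `T = ∂ₜ + v·∇ₓ`, i.e. the directional derivative
along `(1,v)`. -/
def Tstr (v : E3) (g : ℝ × E3 → ℝ) (p : ℝ × E3) : ℝ := fderiv ℝ g p ((1 : ℝ), v)

/-!
The difference `t (∂ₜ + v·∇ₓ) - (t - x·v) ∂ₜ` is the Lorentz boost `(x·v) ∂ₜ + t v·∇ₓ`, so the
identity says that `Y` is invariant under boosts. In polar coordinates `Y` is the image of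
`dx / (4π‖x‖)` under the parametrisation `x ↦ (‖x‖, x)` of the light cone. The boost is tangent to
the cone, and in this chart it is `‖x‖ v·∇ₓ`; the factor `‖x‖` cancels the density, and what is
left is the integral over space of the derivative along `v` of the Lipschitz, compactly supported
function `x ↦ φ (‖x‖, x)`, which vanishes.
-/

theorem lintegral_eq_lintegral_Ioi_lintegral_toSphere {E : Type*} [NormedAddCommGroup E]
    [NormedSpace ℝ E] [FiniteDimensional ℝ E] [Nontrivial E] [MeasurableSpace E] [BorelSpace E]
    (μ : Measure E) [μ.IsAddHaarMeasure] {f : E → ℝ≥0∞} (hf : Measurable f) :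
    ∫⁻ x, f x ∂μ = ∫⁻ t in Ioi (0 : ℝ), ENNReal.ofReal (t ^ (Module.finrank ℝ E - 1)) *
      ∫⁻ ω : sphere (0 : E) 1, f (t • (ω : E)) ∂μ.toSphere := by
  let fPolar (q : sphere (0 : E) 1 × Ioi (0 : ℝ)) : ℝ≥0∞ := f (q.2.1 • (q.1 : E))
  have hfPolar : Measurable fPolar := by fun_prop
  calc
    ∫⁻ x, f x ∂μ = ∫⁻ x : ({0}ᶜ : Set E), f x ∂μ.comap Subtype.val := by
      rw [lintegral_subtype_comap (measurableSet_singleton _).compl, restrict_compl_singleton]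
    _ = ∫⁻ x : ({0}ᶜ : Set E), fPolar (homeomorphUnitSphereProd E x) ∂μ.comap Subtype.val := by
      refine lintegral_congr fun x => ?_
      have hx : ‖x.1‖ ≠ 0 := norm_ne_zero_iff.2 x.2
      simp [fPolar, smul_smul, hx]
    _ = ∫⁻ q, fPolar q ∂μ.toSphere.prod (.volumeIoiPow (Module.finrank ℝ E - 1)) :=
      μ.measurePreserving_homeomorphUnitSphereProd.lintegral_comp hfPolar
    _ = ∫⁻ t : Ioi (0 : ℝ), ENNReal.ofReal (t.1 ^ (Module.finrank ℝ E - 1)) *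
          ∫⁻ ω, fPolar (ω, t) ∂μ.toSphere ∂.comap Subtype.val volume := by
      rw [lintegral_prod_symm _ hfPolar.aemeasurable, Measure.volumeIoiPow,
        lintegral_withDensity_eq_lintegral_mul _ (by fun_prop) hfPolar.lintegral_prod_left']
      rfl
    _ = _ := lintegral_subtype_comap measurableSet_Ioi fun t : ℝ =>
      ENNReal.ofReal (t ^ (Module.finrank ℝ E - 1)) *
        ∫⁻ ω : sphere (0 : E) 1, f (t • (ω : E)) ∂μ.toSphere

theorem integral_lineDeriv_eq_zero {E : Type*} [NormedAddCommGroup E] [NormedSpace ℝ E]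
    [FiniteDimensional ℝ E] [MeasurableSpace E] [BorelSpace E] (μ : Measure E)
    [μ.IsAddHaarMeasure] {C : ℝ≥0} {f : E → ℝ} (hf : LipschitzWith C f)
    (hfc : HasCompactSupport f) (v : E) :
    ∫ x, lineDeriv ℝ f x v ∂μ = 0 := by
  have hparts : ∫ x, lineDeriv ℝ (fun _ : E => (1 : ℝ)) x (-v) * f x ∂μ
      = ∫ x, lineDeriv ℝ f x (- -v) * 1 ∂μ :=
    (LipschitzWith.const 1).integral_lineDeriv_mul_eq hf hfc (-v)
  simpa [lineDeriv] using hparts.symm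

theorem integrable_mul_fderiv_apply {E : Type*} [NormedAddCommGroup E] [NormedSpace ℝ E]
    [MeasurableSpace E] [OpensMeasurableSpace E] {ν : Measure E} [IsFiniteMeasureOnCompacts ν]
    {c φ : E → ℝ} (hc : Continuous c) (hφ : ContDiff ℝ 1 φ) (hφc : HasCompactSupport φ) (w : E) :
    Integrable (fun p => c p * fderiv ℝ φ p w) ν :=
  have hφ' : Continuous (fderiv ℝ φ) := hφ.continuous_fderiv one_ne_zero
  (hc.mul (hφ'.clm_apply continuous_const)).integrable_of_hasCompactSupport
    (hφc.fderiv_apply ℝ w).mul_left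

theorem isClosedEmbedding_norm_prodMk {E : Type*} [NormedAddCommGroup E] :
    Topology.IsClosedEmbedding fun x : E => (‖x‖, x) :=
  Function.LeftInverse.isClosedEmbedding (f := Prod.snd) (fun _ => rfl) continuous_snd
    (by fun_prop)

section LorentzBoost

variable {E : Type*} [NormedAddCommGroup E] [InnerProductSpace ℝ E]

/-- The Lorentz boost in direction `v`, i.e. the vector field `(x·v) ∂ₜ + t v·∇ₓ` on `ℝₜ × E`
acting as a derivation. It is tangent to the light cone `t = ‖x‖`. -/
def lorentzBoost (v : E) (g : ℝ × E → ℝ) (p : ℝ × E) : ℝ :=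
  fderiv ℝ g p (⟪p.2, v⟫, p.1 • v)

theorem hasFDerivAt_norm_of_ne_zero {x : E} (hx : x ≠ 0) :
    HasFDerivAt (fun y : E => ‖y‖) (‖x‖⁻¹ • innerSL ℝ x) x := by
  have h := (hasStrictFDerivAt_norm_sq x).hasFDerivAt.sqrt (by simpa using hx)
  simp only [sqrt_sq (norm_nonneg _)] at h
  convert h using 1
  rw [← Nat.cast_smul_eq_nsmul ℝ, smul_smul]
  congr 1
  push_cast
  ring

theorem norm_mul_lineDeriv_comp_norm_prodMk {φ : ℝ × E → ℝ} {x : E}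
    (hφ : DifferentiableAt ℝ φ (‖x‖, x)) (hx : x ≠ 0) (v : E) :
    ‖x‖ * lineDeriv ℝ (fun y => φ (‖y‖, y)) x v = lorentzBoost v φ (‖x‖, x) := by
  have hderiv : HasLineDerivAt ℝ (fun y => φ (‖y‖, y))
      (fderiv ℝ φ (‖x‖, x) (‖x‖⁻¹ * ⟪x, v⟫, v)) x v := by
    simpa [Function.comp_def] using (HasFDerivAt.comp (f := fun y : E => (‖y‖, y)) x hφ.hasFDerivAt
      ((hasFDerivAt_norm_of_ne_zero hx).prodMk (hasFDerivAt_id x))).hasLineDerivAt v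
  rw [hderiv.lineDeriv, lorentzBoost, ← smul_eq_mul, ← map_smul, Prod.smul_mk, smul_eq_mul,
    mul_inv_cancel_left₀ (norm_ne_zero_iff.2 hx)]

variable [FiniteDimensional ℝ E] [MeasurableSpace E] [BorelSpace E]

theorem integral_inv_norm_mul_lorentzBoost_eq_zero (μ : Measure E) [μ.IsAddHaarMeasure]
    {φ : ℝ × E → ℝ} (hφ : ContDiff ℝ 1 φ) (hφc : HasCompactSupport φ) (v : E) :
    ∫ x, ‖x‖⁻¹ * lorentzBoost v φ (‖x‖, x) ∂μ = 0 := by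
  nontriviality E
  obtain ⟨C, hC⟩ := ContDiff.lipschitzWith_of_hasCompactSupport hφc hφ one_ne_zero
  have hlip := hC.comp ((lipschitzWith_one_norm (E := E)).prodMk LipschitzWith.id)
  have hcs := hφc.comp_isClosedEmbedding (isClosedEmbedding_norm_prodMk (E := E))
  rw [← integral_lineDeriv_eq_zero μ hlip hcs v]
  refine integral_congr_ae ?_
  filter_upwards [Measure.ae_ne μ 0] with x hx
  rw [← norm_mul_lineDeriv_comp_norm_prodMk (hφ.differentiable one_ne_zero _) hx,
    inv_mul_cancel_left₀ (norm_ne_zero_iff.2 hx)]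
  rfl

end LorentzBoost

section Ymeas

instance : IsFiniteMeasure sphMeasure :=
  inferInstanceAs (IsFiniteMeasure (volume : Measure E3).toSphere)

theorem lintegral_Ymeas {f : ℝ × E3 → ℝ≥0∞} (hf : Measurable f) :
    ∫⁻ p, f p ∂Ymeas = ∫⁻ t in Ioi (0 : ℝ), ENNReal.ofReal (t / (4 * π)) *
      ∫⁻ ω : sphere (0 : E3) 1, f (t, t • (ω : E3)) ∂sphMeasure := by
  have hcone : Measurable fun q : ℝ × sphere (0 : E3) 1 => f (q.1, q.1 • (q.2 : E3)) := by
    fun_prop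
  rw [Ymeas, lintegral_map hf (by fun_prop), lintegral_prod _ hcone.aemeasurable,
    lintegral_withDensity_eq_lintegral_mul _ (by fun_prop) hcone.lintegral_prod_right']
  rfl

theorem Ymeas_eq_map_norm_prodMk :
    Ymeas = ((volume : Measure E3).withDensity fun x => ENNReal.ofReal (4 * π * ‖x‖)⁻¹).map
      fun x => (‖x‖, x) := by
  refine Measure.ext_of_lintegral _ fun f hf => ?_
  have hf' : Measurable fun x : E3 => f (‖x‖, x) := by fun_prop
  rw [lintegral_Ymeas hf, lintegral_map hf (by fun_prop),
    lintegral_withDensity_eq_lintegral_mul _ (by fun_prop) hf',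
    lintegral_eq_lintegral_Ioi_lintegral_toSphere (volume : Measure E3) (by fun_prop)]
  refine setLIntegral_congr_fun measurableSet_Ioi fun t (ht : 0 < t) => ?_
  have hnorm (ω : sphere (0 : E3) 1) : ‖t • (ω : E3)‖ = t := by simp [norm_smul, ht.le]
  have hjac : t / (4 * π) = t ^ 2 * (4 * π * t)⁻¹ := by field_simp
  simp only [Pi.mul_apply, hnorm, finrank_euclideanSpace_fin, Nat.add_one_sub_one]
  rw [lintegral_const_mul _ (by fun_prop), ← mul_assoc, ← ENNReal.ofReal_mul (by positivity), hjac]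
  rfl

theorem integral_Ymeas (f : ℝ × E3 → ℝ) :
    ∫ p, f p ∂Ymeas = (4 * π)⁻¹ * ∫ x : E3, ‖x‖⁻¹ * f (‖x‖, x) := by
  rw [Ymeas_eq_map_norm_prodMk, isClosedEmbedding_norm_prodMk.measurableEmbedding.integral_map,
    integral_withDensity_eq_integral_toReal_smul (by fun_prop)
      (.of_forall fun _ => ENNReal.ofReal_lt_top), ← integral_const_mul]
  refine integral_congr_ae (.of_forall fun x => ?_)
  simp only [smul_eq_mul]
  rw [ENNReal.toReal_ofReal (by positivity), mul_inv, mul_assoc]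

instance : IsFiniteMeasureOnCompacts Ymeas where
  lt_top_of_isCompact K hK := by
    let radial : Measure ℝ :=
      (volume.restrict (Ioi 0)).withDensity fun t => ENNReal.ofReal (t / (4 * π))
    have : IsLocallyFiniteMeasure radial :=
      IsLocallyFiniteMeasure.withDensity_ofReal (by fun_prop)
    have hT : IsCompact (Prod.fst '' K) := hK.image continuous_fst
    calc
      Ymeas K ≤ Ymeas (Prod.fst ⁻¹' (Prod.fst '' K)) := measure_mono (subset_preimage_image _ _)
      _ = radial.prod sphMeasure ((Prod.fst '' K) ×ˢ univ) := by
        rw [Ymeas, Measure.map_apply (by fun_prop) (measurable_fst hT.measurableSet), prod_univ]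
        rfl
      _ = radial (Prod.fst '' K) * sphMeasure univ := Measure.prod_prod _ _
      _ < ∞ := ENNReal.mul_lt_top hT.measure_lt_top (measure_lt_top _ _)

theorem integral_lorentzBoost_Ymeas {φ : ℝ × E3 → ℝ} (hφ : ContDiff ℝ 1 φ)
    (hφc : HasCompactSupport φ) (v : E3) : ∫ p, lorentzBoost v φ p ∂Ymeas = 0 := by
  rw [integral_Ymeas, integral_inv_norm_mul_lorentzBoost_eq_zero volume hφ hφc v, mul_zero]

theorem mul_Tstr_sub_mul_dt4 (v : E3) (φ : ℝ × E3 → ℝ) (p : ℝ × E3) :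
    p.1 * Tstr v φ p - (p.1 - ⟪p.2, v⟫) * dt4 φ p = lorentzBoost v φ p := by
  simp only [Tstr, dt4, lorentzBoost, ← smul_eq_mul, ← map_smul, ← map_sub]
  congr 1
  ext <;> simp

theorem first_cone_identity_general (v : E3) {φ : ℝ × E3 → ℝ}
    (hφ : ContDiff ℝ 1 φ) (hφc : HasCompactSupport φ) :
    ∫ p : ℝ × E3, (p.1 - ⟪p.2, v⟫) * dt4 φ p ∂Ymeas
      = ∫ p : ℝ × E3, p.1 * Tstr v φ p ∂Ymeas := by
  have hT : Integrable (fun p => p.1 * Tstr v φ p) Ymeas :=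
    integrable_mul_fderiv_apply continuous_fst hφ hφc _
  have ht : Integrable (fun p => (p.1 - ⟪p.2, v⟫) * dt4 φ p) Ymeas :=
    integrable_mul_fderiv_apply (by fun_prop) hφ hφc _
  refine (sub_eq_zero.1 ?_).symm
  rw [← integral_sub hT ht]
  simp only [mul_Tstr_sub_mul_dt4]
  exact integral_lorentzBoost_Ymeas hφ hφc v

end Ymeas

/-- **First cone identity for the streaming operator**: for `|v| < 1` and every
`φ ∈ C_c^∞(ℝ⁴)`, `⟨Y, (t - x·v) ∂ₜφ⟩ = ⟨Y, t(∂ₜ + v·∇ₓ)φ⟩`, i.e.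
`(t - x·v) ∂ₜY = t T Y` in the sense of distributions on `ℝ⁴`. -/
theorem first_cone_identity (v : E3) (hv : ‖v‖ < 1) (φ : ℝ × E3 → ℝ)
    (hφ : ContDiff ℝ (⊤ : ℕ∞) φ) (hφc : HasCompactSupport φ) :
    ∫ p : ℝ × E3, (p.1 - ⟪p.2, v⟫) * dt4 φ p ∂Ymeas
      = ∫ p : ℝ × E3, p.1 * Tstr v φ p ∂Ymeas :=
  first_cone_identity_general v (hφ.of_le (mod_cast le_top)) hφc
end
end
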